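/- Let V be a finite-dimensional irreducible □_q-module of type 1. Then V is isomorphic to ^{ρ²}V as a □_q-module; that is, there exists an F-linear bijection σ: V → V such that σ(x_i·v) = x_{i+2}·σ(v) for all i ∈ ℤ/4ℤ and all v ∈ V. -/

import Mathlib

/-!
The isomorphism `V ≅ ^{ρ²}V` is obtained by composing two self-dualities of `V`.

Transposing the generators reverses the Weyl relations, so the dual space `V*` is a `□_q`-module
when `x_i` acts as the transpose of `x_{2-i}`; it is again irreducible of type 1 and of the same
diameter. The claim `BoxHyp.exists_dual_iso` is that `V` is isomorphic to this module. Applied to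
`V` and to its rotation, it provides isomorphisms `V → V*` which carry `x_i` to the transpose of
`x_{2-i}` and of `x_{4-i}` respectively, and one followed by the inverse of the other is the map
sought (`BoxHyp.exists_rho_sq`).

The self-duality rests on four facts.

* By the Weyl relations the eigenspaces of `x_i` in one order and those of `x_{i+1}` in the opposite
  order induce the same flag (`WeylPair.flag_eq`), so the four generators define four flags. Flags
  attached to `i` and `i + 2` are opposite, because the sums of their intersections are submodules
  (`BoxHyp.opp_invariant`). This gives a split decomposition `U` of `V` for the pair `x_i`,
  `x_{i+2}` (`BoxHyp.package`).
* A subspace invariant under `x_i` and `x_{i+2}` is a submodule (`BoxHyp.irr_pair`), by a comparison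
  of dimensions of intersections with the flags; and `x_i`, `x_{i+2}` determine the remaining
  generators (`BoxHyp.intertwine_succ`).
* The lowering part `R` of `x_i` and the raising part `L` of `x_{i+2}` satisfy the cubic `q`-Serre
  relations (`SplitDec.serre`). These force `X ^ i * Y ^ b * X ^ (m - i)` to be an exponential sum
  in `i` with `2 b + 1` frequencies (`QGen.expForm`). Interpolation then shows that the operators
  `R ^ a * L ^ a` commute on `U 0` (`LRData.comm`), and that on a common eigenvector in `U 0` every
  word of degree `0` in `R`, `L` acts as a scalar (`LRData.word_mem_span`). Hence `U 0` is a line.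
* The eigenvalues of `R ^ a * L ^ a` on `U 0` determine the irreducible pair up to isomorphism
  (`Package.exists_iso`): in the product of two modules with the same eigenvalues, the sum of the
  two eigenvectors generates the graph of an isomorphism.

On `U 0` the operator `R ^ a * L ^ a` is a product of factors `x_i - const` and `x_{i+2} - const`,
so pairing the lines `U 0` of `V` and of `V*` shows that their eigenvalues agree.
-/


noncomputable section

open FreeAlgebra

variable (F : Type) [Field F]

/-- The defining relations of the algebra `□_q` (Terwilliger), on the free algebra
with generators `x_i`, `i ∈ ℤ/4ℤ`. -/
inductive BoxRel (q : F) : FreeAlgebra F (ZMod 4) → FreeAlgebra F (ZMod 4) → Prop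
  | rel1 (i : ZMod 4) : BoxRel q
      (q • (ι F i * ι F (i + 1)) - q⁻¹ • (ι F (i + 1) * ι F i))
      ((q - q⁻¹) • (1 : FreeAlgebra F (ZMod 4)))
  | rel2 (i : ZMod 4) : BoxRel q
      (ι F i ^ 3 * ι F (i + 2) +
        ((q ^ 3 - (q⁻¹) ^ 3) / (q - q⁻¹)) • (ι F i * ι F (i + 2) * ι F i ^ 2))
      (((q ^ 3 - (q⁻¹) ^ 3) / (q - q⁻¹)) • (ι F i ^ 2 * ι F (i + 2) * ι F i) +
        ι F (i + 2) * ι F i ^ 3)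

/-- The algebra `□_q`, presented by generators and relations. -/
abbrev BoxQ (q : F) : Type := RingQuot (BoxRel F q)

/-- The generators `x_i` of `□_q`. -/
def bx (q : F) (i : ZMod 4) : BoxQ F q :=
  RingQuot.mkAlgHom F (BoxRel F q) (ι F i)

/-- `f` acts semisimply: `V` is spanned by the eigenspaces of `f`. -/
def SemisimpleOn {V : Type} [AddCommGroup V] [Module F V] (f : Module.End F V) : Prop :=
  (⨆ θ : F, Module.End.eigenspace f θ) = ⊤

/-- The set of (distinct) eigenvalues of `f`. -/
def EigSet {V : Type} [AddCommGroup V] [Module F V] (f : Module.End F V) : Set F :=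
  {θ : F | Module.End.eigenspace f θ ≠ ⊥}

/-- The representation `π` of `A` on `V` is irreducible. -/
def IsIrrep {A V : Type} [Ring A] [Algebra F A] [AddCommGroup V] [Module F V]
    (π : A →ₐ[F] Module.End F V) : Prop :=
  Nontrivial V ∧ ∀ W : Submodule F V, (∀ a : A, ∀ v ∈ W, π a v ∈ W) → W = ⊥ ∨ W = ⊤

/-- Isomorphism of representations of `A`. -/
def RepIso {A V W : Type} [Ring A] [Algebra F A] [AddCommGroup V] [Module F V]
    [AddCommGroup W] [Module F W]
    (π : A →ₐ[F] Module.End F V) (π' : A →ₐ[F] Module.End F W) : Prop :=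
  ∃ σ : V ≃ₗ[F] W, ∀ (a : A) (v : V), σ (π a v) = π' a (σ v)

/-- The `□_q`-module given by `π` has type `1` and diameter `d`: each generator `x_i`
acts semisimply with set of distinct eigenvalues `{q^(d-2n) : 0 ≤ n ≤ d}`. -/
def Type1Diam (q : F) {V : Type} [AddCommGroup V] [Module F V]
    (π : BoxQ F q →ₐ[F] Module.End F V) (d : ℕ) : Prop :=
  ∀ i : ZMod 4, SemisimpleOn F (π (bx F q i)) ∧
    EigSet F (π (bx F q i)) =
      {θ : F | ∃ n : ℕ, n ≤ d ∧ θ = q ^ ((d : ℤ) - 2 * (n : ℤ))}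

section Aux

variable {F}

/-! ### Sequences `X ^ i * Y ^ b * X ^ (m - i)` -/

/-- `QGen q X n s Z` says that `∏_{j < n} (l - q ^ (2 (s + j)) r)` annihilates `Z`, where `l` and
`r` are left and right multiplication by `X`. -/
def QGen {A : Type} [Ring A] [Algebra F A] (q : F) (X : A) : ℕ → ℤ → A → Prop
  | 0, _, Z => Z = 0
  | n + 1, s, Z => QGen q X n (s + 1) (X * Z - q ^ (2 * s) • (Z * X))

section QGenLemmas

variable {A : Type} [Ring A] [Algebra F A] {q : F} {X : A}

lemma QGen.zero (n : ℕ) (s : ℤ) : QGen q X n s (0 : A) := by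
  induction n generalizing s with
  | zero => rfl
  | succ n ih => simpa [QGen] using ih (s + 1)

lemma QGen.add {n : ℕ} {s : ℤ} {Z Z' : A} (h : QGen q X n s Z) (h' : QGen q X n s Z') :
    QGen q X n s (Z + Z') := by
  induction n generalizing s Z Z' with
  | zero => simp only [QGen] at *; simp [h, h']
  | succ n ih =>
    simp only [QGen] at *
    convert ih h h' using 1
    rw [mul_add, add_mul, smul_add]; abel

lemma QGen.smul {n : ℕ} {s : ℤ} {Z : A} (c : F) (h : QGen q X n s Z) :
    QGen q X n s (c • Z) := by
  induction n generalizing s Z with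
  | zero => simp only [QGen] at *; simp [h]
  | succ n ih =>
    simp only [QGen] at *
    convert ih h using 1
    rw [mul_smul_comm, smul_mul_assoc, smul_sub, smul_comm c]

/-- Annihilating root sets add under multiplication, as
`(l - λ μ r)(A * B) = ((l - λ r) A) * B + λ • A * ((l - μ r) B)`. -/
lemma QGen.mul (hq : q ≠ 0) {n k : ℕ} {s t : ℤ} {Z Z' : A} (h : QGen q X (n + 1) s Z)
    (h' : QGen q X (k + 1) t Z') : QGen q X (n + k + 1) (s + t) (Z * Z') := by
  induction hN : n + k generalizing n k s t Z Z' with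
  | zero =>
    obtain ⟨rfl, rfl⟩ : n = 0 ∧ k = 0 := by omega
    simp only [QGen, sub_eq_zero] at *
    rw [← mul_assoc, h, smul_mul_assoc, mul_assoc, h', mul_smul_comm, smul_smul, mul_assoc,
      mul_add, zpow_add₀ hq]
  | succ N ih =>
    have key : X * (Z * Z') - q ^ (2 * (s + t)) • (Z * Z' * X) =
        (X * Z - q ^ (2 * s) • (Z * X)) * Z' +
          q ^ (2 * s) • (Z * (X * Z' - q ^ (2 * t) • (Z' * X))) := by
      rw [sub_mul, mul_sub, smul_sub, mul_smul_comm, smul_smul, mul_add, zpow_add₀ hq,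
        smul_mul_assoc]
      simp only [mul_assoc]; abel
    rw [QGen, key]
    refine QGen.add ?_ (QGen.smul _ ?_)
    · rw [QGen] at h
      cases n with
      | zero => rw [show X * Z - q ^ (2 * s) • (Z * X) = 0 from h, zero_mul]; exact QGen.zero _ _
      | succ n =>
        have := ih h h' (by omega)
        rwa [show s + 1 + t = s + t + 1 by ring] at this
    · rw [QGen] at h'
      cases k with
      | zero => rw [show X * Z' - q ^ (2 * t) • (Z' * X) = 0 from h', mul_zero]; exact QGen.zero _ _
      | succ k =>
        have := ih h h' (by omega)
        rwa [show s + (t + 1) = s + t + 1 by ring] at this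

/-- The cubic `q`-Serre relation, in the shape used by `BoxRel.rel2`. -/
def Serre (q : F) (X Y : A) : Prop :=
  X ^ 3 * Y + (q ^ 2 + 1 + (q⁻¹) ^ 2) • (X * Y * X ^ 2) =
    (q ^ 2 + 1 + (q⁻¹) ^ 2) • (X ^ 2 * Y * X) + Y * X ^ 3

lemma Serre.qGen (hq : q ≠ 0) {Y : A} (h : Serre q X Y) : QGen q X 3 (-1) Y := by
  have e1 : q ^ (2 * (-1 : ℤ)) = (q⁻¹) ^ 2 := by
    rw [show (2 * (-1 : ℤ)) = -(2 : ℕ) by norm_num, zpow_neg, zpow_natCast, inv_pow]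
  have e2 : q ^ (2 * (-1 + 1 : ℤ)) = 1 := by norm_num
  have e3 : q ^ (2 * (-1 + 1 + 1 : ℤ)) = q ^ 2 := by norm_num
  have e4 : (q⁻¹) ^ 2 * q ^ 2 = 1 := by field_simp
  simp only [QGen, e1, e2, e3]
  have h' := sub_eq_zero.mpr h
  have key : ∀ a b : F, a * b = 1 →
      X * (X * (X * Y - a • (Y * X)) - (1 : F) • ((X * Y - a • (Y * X)) * X)) -
        b • ((X * (X * Y - a • (Y * X)) - (1 : F) • ((X * Y - a • (Y * X)) * X)) * X) =
      X ^ 3 * Y + (b + 1 + a) • (X * Y * X ^ 2) -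
        ((b + 1 + a) • (X ^ 2 * Y * X) + Y * X ^ 3) := by
    intro a b hab
    simp only [one_smul, mul_sub, sub_mul, mul_smul_comm, smul_mul_assoc, smul_sub, smul_smul,
      add_smul, mul_comm b a, hab, pow_succ, pow_zero, one_mul, mul_assoc]
    abel
  rw [key _ _ e4]
  exact h'

lemma QGen.pow (hq : q ≠ 0) {Y : A} (h : QGen q X 3 (-1) Y) (b : ℕ) :
    QGen q X (2 * b + 1) (-b) (Y ^ b) := by
  induction b with
  | zero => simp [QGen]
  | succ b ih =>
    have := QGen.mul hq ih h
    rw [pow_succ]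
    rwa [show (-(b : ℤ) + -1) = -((b + 1 : ℕ) : ℤ) by push_cast; ring] at this

/-- The solution of the recurrence: `X ^ i * Z * X ^ (m - i)` is an exponential sum in `i`. -/
lemma QGen.expForm (hq : q ≠ 0) (hq1 : ∀ n : ℕ, 0 < n → q ^ n ≠ 1) {n : ℕ} {s : ℤ} {Z : A}
    (h : QGen q X n s Z) (m : ℕ) :
    ∃ B : ℕ → A, ∀ i ≤ m, X ^ i * Z * X ^ (m - i) =
      ∑ k ∈ Finset.range n, (q ^ (2 * (s + k))) ^ i • B k := by
  induction n generalizing s Z m with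
  | zero => exact ⟨0, fun i _ => by rw [show Z = 0 from h]; simp⟩
  | succ n ih =>
    cases m with
    | zero =>
      refine ⟨fun k => if k = 0 then Z else 0, fun i hi => ?_⟩
      obtain rfl : i = 0 := by omega
      simp
    | succ m =>
      obtain ⟨B, hB⟩ := ih h m
      have hne : ∀ k : ℕ, q ^ (2 * (s + 1 + k)) - q ^ (2 * s) ≠ 0 := by
        intro k hk
        rw [sub_eq_zero, show 2 * (s + 1 + k) = 2 * s + (2 * (k + 1) : ℕ) by push_cast; ring,
          zpow_add₀ hq, zpow_natCast] at hk
        exact hq1 _ (by omega) (mul_left_cancel₀ (zpow_ne_zero _ hq) (hk.trans (mul_one _).symm))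
      set B' : ℕ → A := fun k => (q ^ (2 * (s + 1 + k)) - q ^ (2 * s))⁻¹ • B k with hB'
      refine ⟨fun k => match k with
        | 0 => Z * X ^ (m + 1) - ∑ k ∈ Finset.range n, B' k
        | k + 1 => B' k, fun i hi => ?_⟩
      rw [Finset.sum_range_succ']
      simp only
      induction i with
      | zero => simp
      | succ i ihi =>
        have h1 := ihi (by omega)
        have h2 := hB i (by omega)
        have h3 : X ^ (i + 1) * Z * X ^ (m + 1 - (i + 1)) =
            X ^ i * (X * Z - q ^ (2 * s) • (Z * X)) * X ^ (m - i) +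
              q ^ (2 * s) • (X ^ i * Z * X ^ (m + 1 - i)) := by
          rw [show m + 1 - (i + 1) = m - i by omega, show m + 1 - i = (m - i) + 1 by omega,
            pow_succ X i, pow_succ' X (m - i), mul_sub, sub_mul, mul_smul_comm, smul_mul_assoc]
          simp only [mul_assoc]; abel
        rw [h3, h2, h1, smul_add, ← add_assoc, Finset.smul_sum, ← Finset.sum_add_distrib]
        congr 1
        · refine Finset.sum_congr rfl fun k _ => ?_
          have hc : B k = (q ^ (2 * (s + 1 + k)) - q ^ (2 * s)) • B' k := by
            rw [hB', smul_smul, mul_inv_cancel₀ (hne k), one_smul]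
          rw [hc]
          generalize B' k = T
          rw [smul_smul, smul_smul, ← add_smul]
          congr 1
          push_cast
          rw [show s + (k + 1 : ℤ) = s + 1 + k by ring]
          ring
        · rw [smul_smul]; congr 1; push_cast; ring_nf

end QGenLemmas

/-- An exponential sum with `n` consecutive frequencies lies in `S` as soon as it does at `n`
distinct points. -/
lemma expSum_mem {W : Type} [AddCommGroup W] [Module F W] {q : F} (hq : q ≠ 0)
    (hq1 : ∀ n : ℕ, 0 < n → q ^ n ≠ 1) (S : Submodule F W) {n : ℕ} {s : ℤ} (B : ℕ → W)
    (I : Finset ℕ) (hI : I.card = n)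
    (h : ∀ i ∈ I, ∑ k ∈ Finset.range n, (q ^ (2 * (s + k))) ^ i • B k ∈ S) (i : ℕ) :
    ∑ k ∈ Finset.range n, (q ^ (2 * (s + k))) ^ i • B k ∈ S := by
  have hinj : Function.Injective (fun i : ℕ => q ^ (2 * i)) := by
    have aux : ∀ i k : ℕ, q ^ (2 * i) = q ^ (2 * (i + (k + 1))) → False := by
      intro i k hk
      rw [mul_add, pow_add] at hk
      exact hq1 (2 * (k + 1)) (by omega)
        (mul_left_cancel₀ (pow_ne_zero _ hq) (((mul_one _).trans hk).symm))
    intro i j hij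
    rcases lt_trichotomy i j with h | h | h
    · obtain ⟨k, rfl⟩ := Nat.exists_eq_add_of_lt h
      exact (aux _ _ hij).elim
    · exact h
    · obtain ⟨k, rfl⟩ := Nat.exists_eq_add_of_lt h
      exact (aux _ _ hij.symm).elim
  have hform : ∀ i : ℕ, ∑ k ∈ Finset.range n, (q ^ (2 * (s + k))) ^ i • B k =
      (q ^ (2 * s)) ^ i • ∑ k : Fin n, (q ^ (2 * i)) ^ (k : ℕ) • B k := by
    intro i
    rw [Fin.sum_univ_eq_sum_range (fun k => (q ^ (2 * i)) ^ k • B k), Finset.smul_sum]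
    refine Finset.sum_congr rfl fun k _ => ?_
    rw [smul_smul]
    congr 1
    rw [mul_add, zpow_add₀ hq, mul_pow, ← pow_mul]
    congr 1
    rw [show (2 * (k : ℤ)) = ((2 * k : ℕ) : ℤ) by push_cast; rfl, zpow_natCast, ← pow_mul]
    ring_nf
  have hB : ∀ k : Fin n, B k ∈ S := by
    let e := I.equivFinOfCardEq hI
    let y : Fin n → F := fun a => q ^ (2 * ((e.symm a : I) : ℕ))
    have hy : Function.Injective y := fun a b hab =>
      e.symm.injective (Subtype.ext (hinj hab))
    have hdet : IsUnit (Matrix.vandermonde y).det :=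
      (Matrix.det_vandermonde_ne_zero_iff.mpr hy).isUnit
    have hmem : ∀ a, ∑ k : Fin n, Matrix.vandermonde y a k • B k ∈ S := by
      intro a
      have := h _ (e.symm a).2
      rw [hform] at this
      have h2 := S.smul_mem (((q ^ (2 * s)) ^ ((e.symm a : I) : ℕ))⁻¹) this
      rwa [smul_smul, inv_mul_cancel₀ (pow_ne_zero _ (zpow_ne_zero _ hq)), one_smul] at h2
    intro k
    have : B k = ∑ a, (Matrix.vandermonde y)⁻¹ k a • ∑ j : Fin n, Matrix.vandermonde y a j • B j := by
      simp_rw [Finset.smul_sum, smul_smul]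
      rw [Finset.sum_comm]
      simp_rw [← Finset.sum_smul, ← Matrix.mul_apply, Matrix.nonsing_inv_mul _ hdet,
        Matrix.one_apply]
      simp
    rw [this]
    exact S.sum_mem fun a _ => S.smul_mem _ (hmem a)
  rw [hform]
  exact S.smul_mem _ (S.sum_mem fun k _ => S.smul_mem _ (hB k))


/-! ### Raising and lowering operators obeying the cubic `q`-Serre relations -/

/-- Operators `R`, `L` that lower and raise the degree of a family `U` of subspaces supported in
nonnegative degrees, and satisfy both cubic `q`-Serre relations. -/
structure LRData {M : Type} [AddCommGroup M] [Module F M] (q : F) (R L : Module.End F M)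
    (U : ℤ → Submodule F M) : Prop where
  neg : ∀ n < 0, U n = ⊥
  lower : ∀ n, ∀ u ∈ U n, R u ∈ U (n - 1)
  raise : ∀ n, ∀ u ∈ U n, L u ∈ U (n + 1)
  serreRL : Serre q R L
  serreLR : Serre q L R

section LR

variable {M : Type} [AddCommGroup M] [Module F M] {q : F} {R L : Module.End F M}
  {U : ℤ → Submodule F M}

lemma LRData.lower_pow (h : LRData q R L U) (a : ℕ) {n : ℤ} {u : M} (hu : u ∈ U n) :
    (R ^ a) u ∈ U (n - a) := by
  induction a with
  | zero => simpa using hu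
  | succ a ih =>
    rw [pow_succ', Module.End.mul_apply]
    have := h.lower _ _ ih
    rwa [show n - a - 1 = n - ((a + 1 : ℕ) : ℤ) by push_cast; ring] at this

lemma LRData.raise_pow (h : LRData q R L U) (a : ℕ) {n : ℤ} {u : M} (hu : u ∈ U n) :
    (L ^ a) u ∈ U (n + a) := by
  induction a with
  | zero => simpa using hu
  | succ a ih =>
    rw [pow_succ', Module.End.mul_apply]
    have := h.raise _ _ ih
    rwa [show n + a + 1 = n + ((a + 1 : ℕ) : ℤ) by push_cast; ring] at this

lemma LRData.eq_zero (h : LRData q R L U) {n : ℤ} (hn : n < 0) {u : M} (hu : u ∈ U n) : u = 0 := by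
  rw [h.neg n hn] at hu; exact hu

/-- The operators `R ^ a * L ^ a` commute on `U 0`. With
`g b c = R ^ (m - b) * L ^ c * R ^ b * L ^ (m - c)` on `U 0`, the difference `g b c - g c b` is, for
fixed `b`, an exponential sum in `c` with `2 b + 1` frequencies; it vanishes for `c < b` by
induction, for `c = b` trivially, and for `c > m - b` for degree reasons. The case `c = m - b` is
the claim. -/
lemma LRData.comm (hq : q ≠ 0) (hq1 : ∀ n : ℕ, 0 < n → q ^ n ≠ 1) (h : LRData q R L U)
    {u : M} (hu : u ∈ U 0) (a b : ℕ) :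
    (R ^ a) ((L ^ a) ((R ^ b) ((L ^ b) u))) = (R ^ b) ((L ^ b) ((R ^ a) ((L ^ a) u))) := by
  obtain ⟨m, hm⟩ : ∃ m, m = a + b := ⟨_, rfl⟩
  have van : ∀ b c : ℕ, b ≤ m → c ≤ m → m < b + c → (R ^ b) ((L ^ (m - c)) u) = 0 := by
    intro b c _ hc hbc
    refine h.eq_zero (n := 0 + (m - c : ℕ) - b) (by omega) (h.lower_pow _ (h.raise_pow _ hu))
  have main : ∀ b c : ℕ, b ≤ m → c ≤ m →
      (R ^ (m - b)) ((L ^ c) ((R ^ b) ((L ^ (m - c)) u))) -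
        (R ^ (m - c)) ((L ^ b) ((R ^ c) ((L ^ (m - b)) u))) = 0 := by
    intro b
    induction b using Nat.strong_induction_on with
    | _ b ih =>
    intro c hb hc
    have easy : ∀ c ≤ m, c ≤ b ∨ m < b + c →
        (R ^ (m - b)) ((L ^ c) ((R ^ b) ((L ^ (m - c)) u))) -
        (R ^ (m - c)) ((L ^ b) ((R ^ c) ((L ^ (m - b)) u))) = 0 := by
      rintro c hc (hcb | hcb)
      · rcases hcb.lt_or_eq with hlt | rfl
        · rw [← neg_sub, ih c hlt b hc hb, neg_zero]
        · exact sub_self _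
      · rw [van b c hb hc hcb, van c b hc hb (by omega)]; simp
    by_cases hbm : m < 2 * b
    · exact easy c hc (by omega)
    push Not at hbm
    obtain ⟨A, hA⟩ := ((h.serreLR.qGen hq).pow hq b).expForm hq hq1 m
    obtain ⟨B, hB⟩ := ((h.serreRL.qGen hq).pow hq b).expForm hq hq1 m
    set D : ℕ → M := fun k => (R ^ (m - b)) (A k u) -
      (q ^ (2 * ((b : ℤ) - k))) ^ m • B (2 * b - k) ((L ^ (m - b)) u) with hD
    have form : ∀ c ≤ m, (R ^ (m - b)) ((L ^ c) ((R ^ b) ((L ^ (m - c)) u))) -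
        (R ^ (m - c)) ((L ^ b) ((R ^ c) ((L ^ (m - b)) u))) =
        ∑ k ∈ Finset.range (2 * b + 1), (q ^ (2 * (-(b : ℤ) + k))) ^ c • D k := by
      intro c hc
      have e1 := congrArg (fun T => (R ^ (m - b)) (T u)) (hA c hc)
      have e2 := congrArg (fun T => T ((L ^ (m - b)) u)) (hB (m - c) (by omega))
      rw [show m - (m - c) = c by omega, ← Finset.sum_range_reflect] at e2
      simp only [Module.End.mul_apply, LinearMap.sum_apply, LinearMap.smul_apply, map_sum,
        map_smul] at e1 e2
      rw [e1, e2, ← Finset.sum_sub_distrib]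
      refine Finset.sum_congr rfl fun k hk => ?_
      have hk' : k ≤ 2 * b := by rw [Finset.mem_range] at hk; omega
      rw [hD, smul_sub, smul_smul, show 2 * b + 1 - 1 - k = 2 * b - k by omega]
      congr 2
      rw [Nat.cast_sub hk', show (2 * (-(b : ℤ) + ((2 * b : ℕ) - k))) = 2 * ((b : ℤ) - k) by
        push_cast; ring, show (2 * (-(b : ℤ) + k)) = -(2 * ((b : ℤ) - k)) by ring, zpow_neg]
      have hx : q ^ (2 * ((b : ℤ) - k)) ≠ 0 := zpow_ne_zero _ hq
      rw [pow_sub₀ _ hx hc, inv_pow, mul_comm]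
    rw [form c hc]
    have := expSum_mem hq hq1 (⊥ : Submodule F M) (n := 2 * b + 1) (s := -(b : ℤ)) D
      (Finset.range (b + 1) ∪ Finset.Ico (m - b + 1) (m + 1)) ?_ ?_ c
    · exact this
    · rw [Finset.card_union_of_disjoint, Finset.card_range, Nat.card_Ico]
      · omega
      · rw [Finset.disjoint_left]
        intro x; simp only [Finset.mem_range, Finset.mem_Ico]; omega
    · intro i hi
      simp only [Finset.mem_union, Finset.mem_range, Finset.mem_Ico] at hi
      rw [← form i (by omega), easy i (by omega) (by omega)]
      exact Submodule.zero_mem _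
  have := main b a (by omega) (by omega)
  rw [show m - b = a by omega, show m - a = b by omega] at this
  exact sub_eq_zero.mp this

/-- The operator of a word `R ^ a₁ L ^ a₂ R ^ a₃ ⋯` (or starting with `L`, if the flag is `false`)
given by its list of exponents. -/
def wordOp (R L : Module.End F M) : Bool → List ℕ → Module.End F M
  | _, [] => 1
  | s, a :: z => (if s then R else L) ^ a * wordOp R L (!s) z

/-- The degree by which a word shifts the grading. -/
def netDeg : Bool → List ℕ → ℤ
  | _, [] => 0
  | s, a :: z => (if s then -(a : ℤ) else a) + netDeg (!s) z

/-- The letter following a word with the given exponents. -/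
def nextLetter : Bool → List ℕ → Bool
  | s, [] => s
  | s, _ :: z => nextLetter (!s) z

lemma wordOp_append (s : Bool) (p z : List ℕ) :
    wordOp R L s (p ++ z) = wordOp R L s p * wordOp R L (nextLetter s p) z := by
  induction p generalizing s with
  | nil => simp [wordOp, nextLetter]
  | cons a p ih => simp [wordOp, nextLetter, ih, mul_assoc]

lemma netDeg_append (s : Bool) (p z : List ℕ) :
    netDeg s (p ++ z) = netDeg s p + netDeg (nextLetter s p) z := by
  induction p generalizing s with
  | nil => simp [netDeg, nextLetter]
  | cons a p ih => simp [netDeg, nextLetter, ih, add_assoc]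

lemma nextLetter_even (s : Bool) (p : List ℕ) (n : ℕ) (hp : p.length = 2 * n) :
    nextLetter s p = s := by
  induction n generalizing p with
  | zero =>
    obtain rfl : p = [] := List.length_eq_zero_iff.mp (by simpa using hp)
    rfl
  | succ n ih =>
    match p, hp with
    | a :: b :: p, hp =>
      simp only [nextLetter, Bool.not_not]
      exact ih p (by simp at hp; omega)

lemma LRData.wordOp_mem (h : LRData q R L U) (s : Bool) (z : List ℕ) {n : ℤ} {u : M}
    (hu : u ∈ U n) : wordOp R L s z u ∈ U (n + netDeg s z) := by
  induction z generalizing s with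
  | nil => simpa [wordOp, netDeg] using hu
  | cons a z ih =>
    rw [wordOp, netDeg, Module.End.mul_apply]
    cases s
    · have := h.raise_pow a (ih true)
      simp only [Bool.not_false, Bool.false_eq_true, if_false]
      rwa [show n + netDeg true z + a = n + (a + netDeg true z) by ring] at this
    · have := h.lower_pow a (ih false)
      simp only [Bool.not_true, if_true]
      rwa [show n + netDeg false z - a = n + (-a + netDeg false z) by ring] at this

/-- The transfer of exponents across an inner block `Y ^ b` whose neighbours have exponents at
least `b` in total `m ≥ 2 b`: membership of `X ^ i * Y ^ b * X ^ (m - i)` in `S` for all `i` follows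
from the cases `i ≤ b` and `m - i < b`. -/
lemma Serre.transfer (hq : q ≠ 0) (hq1 : ∀ n : ℕ, 0 < n → q ^ n ≠ 1) {X Y : Module.End F M}
    (hS : Serre q X Y) (S : Submodule F (Module.End F M)) {b m : ℕ} (hm : 2 * b ≤ m)
    (h1 : ∀ i ≤ b, X ^ i * Y ^ b * X ^ (m - i) ∈ S)
    (h2 : ∀ i ≤ m, m - i < b → X ^ i * Y ^ b * X ^ (m - i) ∈ S) :
    ∀ i ≤ m, X ^ i * Y ^ b * X ^ (m - i) ∈ S := by
  obtain ⟨A, hA⟩ := ((hS.qGen hq).pow hq b).expForm hq hq1 m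
  intro i hi
  rw [hA i hi]
  refine expSum_mem hq hq1 S A (Finset.range (b + 1) ∪ Finset.Ico (m - b + 1) (m + 1)) ?_ ?_ i
  · rw [Finset.card_union_of_disjoint, Finset.card_range, Nat.card_Ico]
    · omega
    · rw [Finset.disjoint_left]
      intro x; simp only [Finset.mem_range, Finset.mem_Ico]; omega
  · intro i hi
    simp only [Finset.mem_union, Finset.mem_range, Finset.mem_Ico] at hi
    rw [← hA i (by omega)]
    rcases hi with hi | hi
    · exact h1 i (by omega)
    · exact h2 i (by omega) (by omega)

/-- If `u` in degree `0` is a common eigenvector of all `R ^ a * L ^ a`, then it is an eigenvector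
of every word of degree `0`. The induction is on the number of blocks, then on the smallest
exponent `b`, then on the position of a block with that exponent: by `Serre.transfer` this block
can be moved to the left until the word starts with `R ^ b * L ^ b`. -/
lemma LRData.word_mem_span (hq : q ≠ 0) (hq1 : ∀ n : ℕ, 0 < n → q ^ n ≠ 1) (h : LRData q R L U)
    {u : M} (hu : u ∈ U 0) (γ : ℕ → F) (hγ : ∀ a, (R ^ a) ((L ^ a) u) = γ a • u)
    (n : ℕ) (z : List ℕ) (hz : z.length = 2 * n) (hnet : netDeg true z = 0) :
    wordOp R L true z u ∈ Submodule.span F {u} := by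
  have hS : ∀ {x}, x ∈ Submodule.span F {u} → ∀ a, (R ^ a) ((L ^ a) x) ∈ Submodule.span F {u} := by
    intro x hx a
    obtain ⟨c, rfl⟩ := Submodule.mem_span_singleton.mp hx
    rw [map_smul, map_smul, hγ]
    exact Submodule.smul_mem _ _ (Submodule.smul_mem _ _ (Submodule.mem_span_singleton_self u))
  induction n generalizing z with
  | zero =>
    obtain rfl : z = [] := List.length_eq_zero_iff.mp (by simpa using hz)
    exact Submodule.mem_span_singleton_self u
  | succ n ihn =>
    have inner : ∀ (b : ℕ) (k : ℕ) (pre post : List ℕ), pre.length = k →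
        (pre ++ b :: post).length = 2 * (n + 1) → netDeg true (pre ++ b :: post) = 0 →
        wordOp R L true (pre ++ b :: post) u ∈ Submodule.span F {u} := by
      intro b
      induction b using Nat.strong_induction_on with
      | _ b ihb =>
      intro k
      induction k using Nat.strong_induction_on with
      | _ k ihk =>
      intro pre post hk hlen hnet
      by_cases hex : ∃ e ∈ pre ++ b :: post, e < b
      · obtain ⟨e, he, heb⟩ := hex
        obtain ⟨p, p', hp⟩ := List.append_of_mem he
        rw [hp] at hlen hnet ⊢
        exact ihb e heb p.length p p' rfl hlen hnet
      push Not at hex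
      rcases List.eq_nil_or_concat pre with rfl | ⟨pre', x, rfl⟩
      · match post, hlen, hnet, hex with
        | [], hlen, _, _ => simp at hlen; omega
        | y :: post', hlen, hnet, hex =>
          have hy : b ≤ y := hex y (by simp)
          simp only [List.nil_append, wordOp, netDeg, Bool.not_true, Bool.not_false, if_true,
            Bool.false_eq_true, if_false, Module.End.mul_apply, List.length_cons] at hnet hlen ⊢
          rcases hy.lt_or_eq with hlt | rfl
          · have := h.eq_zero (by omega) (h.wordOp_mem true post' hu)
            rw [this]; simp
          · exact hS (ihn post' (by omega) (by omega)) b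
      · simp only [List.concat_eq_append] at *
        have hx : b ≤ x := hex x (by simp)
        cases post with
        | nil =>
          have hev : nextLetter true pre' = true :=
            nextLetter_even _ _ n (by simp at hlen; omega)
          simp only [List.append_assoc, List.cons_append, List.nil_append, wordOp_append,
            netDeg_append, hev, wordOp, netDeg, Bool.not_true, if_true, Bool.false_eq_true,
            if_false, Module.End.mul_apply, Module.End.one_apply] at hnet ⊢
          rcases hx.lt_or_eq with hlt | rfl
          · have := h.eq_zero (n := 0 + b - x) (by omega) (h.lower_pow x (h.raise_pow b hu))
            rw [this]; simp
          · rw [hγ, map_smul]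
            exact Submodule.smul_mem _ _ (ihn pre' (by simp at hlen; omega) (by omega))
        | cons y post' =>
          have hy : b ≤ y := hex y (by simp)
          obtain ⟨s, hs⟩ : ∃ s, s = nextLetter true pre' := ⟨_, rfl⟩
          set X := if s then R else L with hX
          set Y := if !s then R else L with hY
          have hXY : Serre q X Y := by
            cases s
            · exact h.serreLR
            · exact h.serreRL
          -- the operators which send the tail of the word to a vector that the head of the
          -- word maps into the span of `u`
          let S : Submodule F (Module.End F M) := (Submodule.span F {u}).comap
            ((wordOp R L true pre').comp (LinearMap.applyₗ (wordOp R L (!s) post' u)))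
          have hop : ∀ i j : ℕ, wordOp R L true (pre' ++ i :: b :: j :: post') u =
              wordOp R L true pre' ((X ^ i * Y ^ b * X ^ j) (wordOp R L (!s) post' u)) := by
            intro i j
            simp only [wordOp_append, ← hs, wordOp, Module.End.mul_apply, Bool.not_not, hX, hY]
          have hmem : ∀ i j : ℕ, wordOp R L true (pre' ++ i :: b :: j :: post') u ∈
              Submodule.span F {u} → X ^ i * Y ^ b * X ^ j ∈ S := by
            intro i j hij
            rw [hop] at hij
            exact hij
          have hsum : ∀ i j : ℕ, i + j = x + y →
              netDeg true (pre' ++ i :: b :: j :: post') = 0 := by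
            intro i j hij
            rw [← hnet]
            simp only [List.append_assoc, List.cons_append, List.nil_append, netDeg_append, ← hs,
              netDeg, Bool.not_not]
            cases s <;> simp <;> omega
          have hlen' : pre'.length + post'.length + 3 = 2 * (n + 1) := by
            simp at hlen; omega
          have := hXY.transfer hq hq1 S (b := b) (m := x + y) (by omega) ?_ ?_ x (by omega)
          · rw [show x + y - x = y by omega] at this
            have h3 : wordOp R L true (pre' ++ x :: b :: y :: post') u ∈ Submodule.span F {u} := by
              rw [hop]; exact this
            simpa using h3
          · intro i hi
            refine hmem _ _ ?_
            rcases hi.lt_or_eq with hlt | rfl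
            · exact ihb i hlt pre'.length pre' _ rfl (by simp; omega) (hsum _ _ (by omega))
            · exact ihk pre'.length (by simp at hk; omega) pre' _ rfl (by simp; omega)
                (hsum _ _ (by omega))
          · intro i hi hib
            refine hmem _ _ ?_
            have := ihb (x + y - i) hib (pre'.length + 2) (pre' ++ [i, b]) post' (by simp)
              (by simp; omega) (by simpa using hsum i (x + y - i) (by omega))
            simpa using this
    match z, hz, hnet with
    | [], hz, _ => simp at hz
    | b :: post, hz, hnet => exact inner b 0 [] post rfl hz hnet

end LR


/-! ### Tridiagonal pairs with respect to a split decomposition -/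

lemma ext_of_iSup {M M' : Type} [AddCommGroup M] [Module F M] [AddCommGroup M'] [Module F M']
    {ι : Type} {U : ι → Submodule F M} (hU : ⨆ n, U n = ⊤) {f g : M →ₗ[F] M'}
    (h : ∀ n, ∀ u ∈ U n, f u = g u) : f = g := by
  have : (⨆ n, U n) ≤ LinearMap.eqLocus f g := iSup_le fun n u hu => h n u hu
  rw [hU] at this
  exact LinearMap.ext fun v => this Submodule.mem_top

/-- The operator acting on the `n`-th summand as the scalar `c n`. -/
lemma exists_diag {M : Type} [AddCommGroup M] [Module F M] {U : ℤ → Submodule F M}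
    (hi : iSupIndep U) (hU : ⨆ n, U n = ⊤) (c : ℤ → F) :
    ∃ K : Module.End F M, ∀ n, ∀ u ∈ U n, K u = c n • u := by
  classical
  have hintl := DirectSum.isInternal_submodule_of_iSupIndep_of_iSup_eq_top hi hU
  let e := LinearEquiv.ofBijective (DirectSum.coeLinearMap U) hintl
  let f : (DirectSum ℤ fun n => U n) →ₗ[F] M :=
    DirectSum.toModule F ℤ M fun n => c n • (U n).subtype
  refine ⟨f ∘ₗ e.symm.toLinearMap, fun n u hu => ?_⟩
  have : e.symm u = DirectSum.lof F ℤ (fun n => U n) n ⟨u, hu⟩ := by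
    rw [LinearEquiv.symm_apply_eq]
    exact (DirectSum.coeLinearMap_lof U n ⟨u, hu⟩).symm
  simp [this, f]

/-- A decomposition `U` of the underlying space on which `x` acts as `q ^ (d - 2 n)` modulo a
lowering term, and `y` as `q ^ (2 n - d)` modulo a raising term. -/
structure SplitDec {M : Type} [AddCommGroup M] [Module F M] (q : F) (d : ℤ)
    (x y : Module.End F M) (U : ℤ → Submodule F M) : Prop where
  indep : iSupIndep U
  sup : ⨆ n, U n = ⊤
  lower : ∀ n, ∀ u ∈ U n, x u - q ^ (d - 2 * n) • u ∈ U (n - 1)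
  raise : ∀ n, ∀ u ∈ U n, y u - q ^ (2 * n - d) • u ∈ U (n + 1)

section Split

variable {M : Type} [AddCommGroup M] [Module F M] {q : F} {d : ℤ} {x y : Module.End F M}
  {U : ℤ → Submodule F M}

lemma SplitDec.swap (h : SplitDec q d x y U) : SplitDec q (-d) y x (fun n => U (-n)) where
  indep := h.indep.comp neg_injective
  sup := by rw [← h.sup]; exact (Equiv.neg ℤ).iSup_comp (g := U)
  lower n u hu := by
    have := h.raise _ u hu
    rwa [show 2 * -n - d = -d - 2 * n by ring, show -n + 1 = -(n - 1) by ring] at this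
  raise n u hu := by
    have := h.lower _ u hu
    rwa [show d - 2 * -n = 2 * n - -d by ring, show -n - 1 = -(n + 1) by ring] at this

lemma Serre.sub {A : Type} [Ring A] [Algebra F A] {X Y Z : A} (h : Serre q X Y)
    (h' : Serre q X Z) : Serre q X (Y - Z) := by
  unfold Serre at *
  rw [← sub_eq_zero] at *
  have := congrArg₂ (· - ·) h h'
  simp only [sub_zero] at this
  rw [← this]
  simp only [mul_sub, sub_mul, smul_sub]
  abel

/-- A `q`-Weyl pair satisfies the cubic `q`-Serre relation. -/
lemma Serre.of_weyl {A : Type} [Ring A] [Algebra F A] {a : F} (hq : q ≠ 0) {X K : A}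
    (ha : a = (q⁻¹) ^ 2) (h : K * X = a • (X * K) + (1 - a) • 1) : Serre q X K := by
  have h2 : K * X ^ 2 = a ^ 2 • (X ^ 2 * K) + (a * (1 - a) + (1 - a)) • X := by
    rw [pow_two, ← mul_assoc, h, add_mul, smul_mul_assoc, mul_assoc, h, mul_add]
    simp only [mul_smul_comm, smul_mul_assoc, mul_one, one_mul, smul_add, smul_smul, mul_assoc]
    module
  have h3 : K * X ^ 3 = a ^ 3 • (X ^ 3 * K) + (a ^ 2 * (1 - a) + (a * (1 - a) + (1 - a))) • X ^ 2 := by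
    rw [pow_succ X 2, ← mul_assoc, h2, add_mul, smul_mul_assoc, mul_assoc, h, mul_add]
    simp only [mul_smul_comm, smul_mul_assoc, mul_one, smul_add, smul_smul, mul_assoc,
      pow_two X]
    module
  have hq2 : q ^ 2 * a = 1 := by rw [ha]; field_simp
  unfold Serre
  rw [h3, mul_assoc X K, h2, mul_assoc (X ^ 2), h, mul_add, mul_add, ← ha]
  simp only [mul_smul_comm, mul_one, smul_add, smul_smul]
  rw [← mul_assoc X, ← mul_assoc (X ^ 2), ← pow_succ', ← pow_succ, ← pow_two]
  norm_num
  have e1 : (q ^ 2 + 1 + a) * a ^ 2 = a + a ^ 2 + a ^ 3 := by linear_combination a * hq2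
  have e2 : (q ^ 2 + 1 + a) * a = 1 + a + a ^ 2 := by linear_combination hq2
  have e3 : (q ^ 2 + 1 + a) * (a * (1 - a) + (1 - a)) =
      (1 + a + a ^ 2) * (1 - a) + (q ^ 2 + 1 + a) * (1 - a) := by
    linear_combination (1 - a) * hq2
  rw [e1, e2, e3]
  module

lemma mem_hi {j k : ℤ} (hjk : j < k) {u : M} (hu : u ∈ U k) : u ∈ ⨆ l > j, U l :=
  Submodule.mem_iSup_of_mem k (Submodule.mem_iSup_of_mem hjk hu)

lemma map_hi {f : Module.End F M} {j j' : ℤ} (h : ∀ k > j, ∀ u ∈ U k, f u ∈ ⨆ l > j', U l)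
    {u : M} (hu : u ∈ ⨆ l > j, U l) : f u ∈ ⨆ l > j', U l := by
  have : (⨆ l > j, U l) ≤ (⨆ l > j', U l).comap f :=
    iSup_le fun k => iSup_le fun hk u hu => h k hk u hu
  exact this hu

/-- The lowering part `R` of `x` and the raising part `L` of `y` inherit the relation between `x`
and `y`: the raising part `L = y - K'` is related to `x` because `K'` and `x` form a `q`-Weyl pair,
and the component of lowest degree of the relation between `x` and `L` is the relation between
`R` and `L`. -/
lemma SplitDec.serre (hq : q ≠ 0) (h : SplitDec q d x y U) (hS : Serre q x y)
    {R L : Module.End F M} (hR : ∀ n, ∀ u ∈ U n, R u = x u - q ^ (d - 2 * n) • u)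
    (hL : ∀ n, ∀ u ∈ U n, L u = y u - q ^ (2 * n - d) • u) : Serre q R L := by
  have lo : ∀ n, ∀ u ∈ U n, R u ∈ U (n - 1) := fun n u hu => by rw [hR n u hu]; exact h.lower n u hu
  have ra : ∀ n, ∀ u ∈ U n, L u ∈ U (n + 1) := fun n u hu => by rw [hL n u hu]; exact h.raise n u hu
  have hK : ∀ n, ∀ u ∈ U n, (y - L) u = q ^ (2 * n - d) • u := fun n u hu => by
    rw [LinearMap.sub_apply, hL n u hu]; abel
  have hKx : (y - L) * x = ((q⁻¹) ^ 2) • (x * (y - L)) + (1 - (q⁻¹) ^ 2) • 1 := by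
    refine ext_of_iSup h.sup fun n u hu => ?_
    have hx : x u = R u + q ^ (d - 2 * n) • u := by rw [hR n u hu]; abel
    have e1 : q ^ (2 * (n - 1) - d) = (q⁻¹) ^ 2 * q ^ (2 * n - d) := by
      rw [show 2 * (n - 1) - d = -(2 : ℕ) + (2 * n - d) by push_cast; ring, zpow_add₀ hq, zpow_neg,
        zpow_natCast, inv_pow]
    have e2 : q ^ (d - 2 * n) * q ^ (2 * n - d) = 1 := by
      rw [← zpow_add₀ hq]; simp
    simp only [Module.End.mul_apply, LinearMap.add_apply, LinearMap.smul_apply,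
      Module.End.one_apply]
    rw [hK n u hu, map_smul, hx, map_add, map_smul, hK _ _ (lo n u hu), hK n u hu, e1]
    simp only [smul_add, smul_smul, e2, mul_comm (q ^ (2 * n - d)) (q ^ (d - 2 * n))]
    module
  have hxL : Serre q x L := by
    have := hS.sub (Serre.of_weyl hq rfl hKx)
    rwa [sub_sub_cancel] at this
  -- `a₀` is the component of lowest degree `j` of `a`
  let Lead : ℤ → M → M → Prop := fun j a a₀ => a₀ ∈ U j ∧ a - a₀ ∈ ⨆ l > j, U l
  have lx : ∀ {j a a₀}, Lead j a a₀ → Lead (j - 1) (x a) (R a₀) := by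
    rintro j a a₀ ⟨h1, h2⟩
    refine ⟨lo _ _ h1, ?_⟩
    have : x a - R a₀ = x (a - a₀) + q ^ (d - 2 * j) • a₀ := by rw [hR j a₀ h1, map_sub]; abel
    rw [this]
    refine Submodule.add_mem _ (map_hi ?_ h2) (mem_hi (by omega) (Submodule.smul_mem _ _ h1))
    intro k hk u hu
    have hx : x u = R u + q ^ (d - 2 * k) • u := by rw [hR k u hu]; abel
    rw [hx]
    exact Submodule.add_mem _ (mem_hi (by omega) (lo _ _ hu))
      (mem_hi (by omega) (Submodule.smul_mem _ _ hu))
  have lL : ∀ {j a a₀}, Lead j a a₀ → Lead (j + 1) (L a) (L a₀) := by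
    rintro j a a₀ ⟨h1, h2⟩
    refine ⟨ra _ _ h1, ?_⟩
    rw [← map_sub]
    exact map_hi (fun k hk u hu => mem_hi (by omega) (ra _ _ hu)) h2
  unfold Serre at *
  refine ext_of_iSup h.sup fun i u hu => ?_
  have l0 : Lead i u u := ⟨hu, by simp⟩
  have cast : ∀ {j j' a a₀}, j = j' → Lead j a a₀ → Lead j' a a₀ := by
    rintro j _ a a₀ rfl h; exact h
  have a1 := cast (j' := i - 2) (by ring) (lx (lx (lx (lL l0))))
  have a2 := cast (j' := i - 2) (by ring) (lx (lL (lx (lx l0))))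
  have a3 := cast (j' := i - 2) (by ring) (lx (lx (lL (lx l0))))
  have a4 := cast (j' := i - 2) (by ring) (lL (lx (lx (lx l0))))
  have hx := LinearMap.congr_fun hxL u
  simp only [pow_succ, pow_zero, one_mul, Module.End.mul_apply, LinearMap.add_apply,
    LinearMap.smul_apply] at hx ⊢
  generalize hc : q * q + 1 + q⁻¹ * q⁻¹ = c at hx ⊢
  rw [← sub_eq_zero] at hx ⊢
  set S := R (R (R (L u))) + c • R (L (R (R u))) - (c • R (R (L (R u))) + L (R (R (R u)))) with hS'
  have m1 : S ∈ U (i - 2) := Submodule.sub_mem _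
    (Submodule.add_mem _ a1.1 (Submodule.smul_mem _ _ a2.1))
    (Submodule.add_mem _ (Submodule.smul_mem _ _ a3.1) a4.1)
  have m2 : S ∈ ⨆ l > i - 2, U l := by
    have : S = -((x (x (x (L u))) - R (R (R (L u)))) + c • (x (L (x (x u))) - R (L (R (R u)))) -
        (c • (x (x (L (x u))) - R (R (L (R u)))) + (L (x (x (x u))) - L (R (R (R u)))))) := by
      rw [hS', ← sub_zero (_ - _), ← hx]
      module
    rw [this]
    exact Submodule.neg_mem _ (Submodule.sub_mem _
      (Submodule.add_mem _ a1.2 (Submodule.smul_mem _ _ a2.2))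
      (Submodule.add_mem _ (Submodule.smul_mem _ _ a3.2) a4.2))
  have hle : (⨆ l > i - 2, U l) ≤ ⨆ l ≠ i - 2, U l :=
    iSup_mono fun l => iSup_mono' fun hl => ⟨ne_of_gt hl, le_rfl⟩
  exact Submodule.disjoint_def.mp (h.indep (i - 2)) S m1 (hle m2)

end Split


/-- A split decomposition in nonnegative degrees of a pair `x`, `y` satisfying both cubic
`q`-Serre relations. -/
structure Package {M : Type} [AddCommGroup M] [Module F M] (q : F) (d : ℤ)
    (x y : Module.End F M) (U : ℤ → Submodule F M) : Prop extends SplitDec q d x y U where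
  neg : ∀ n < 0, U n = ⊥
  serre_xy : Serre q x y
  serre_yx : Serre q y x

/-- The product `(y - q ^ (2 (a - 1) - d)) ⋯ (y - q ^ (-d))`. -/
def upOp {M : Type} [AddCommGroup M] [Module F M] (q : F) (d : ℤ) (y : Module.End F M) :
    ℕ → Module.End F M
  | 0 => 1
  | a + 1 => (y - q ^ (2 * (a : ℤ) - d) • 1) * upOp q d y a

/-- The product `(x - q ^ (d - 2)) ⋯ (x - q ^ (d - 2 a))`. -/
def dnOp {M : Type} [AddCommGroup M] [Module F M] (q : F) (d : ℤ) (x : Module.End F M) :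
    ℕ → Module.End F M
  | 0 => 1
  | a + 1 => dnOp q d x a * (x - q ^ (d - 2 * ((a : ℤ) + 1)) • 1)

section Pack

variable {M : Type} [AddCommGroup M] [Module F M] {q : F} {d : ℤ} {x y : Module.End F M}
  {U : ℤ → Submodule F M}

/-- The raising and lowering operators of a package; on `U 0` the operator
`dnOp q d x a * upOp q d y a` agrees with `R ^ a * L ^ a`. -/
lemma Package.exists_LR (hq : q ≠ 0) (h : Package q d x y U) :
    ∃ R L : Module.End F M, LRData q R L U ∧
      (∀ n, ∀ u ∈ U n, x u = R u + q ^ (d - 2 * n) • u) ∧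
      (∀ n, ∀ u ∈ U n, y u = L u + q ^ (2 * n - d) • u) ∧
      ∀ (a : ℕ), ∀ u ∈ U 0, dnOp q d x a (upOp q d y a u) = (R ^ a) ((L ^ a) u) := by
  obtain ⟨K, hK⟩ := exists_diag h.indep h.sup fun n => q ^ (d - 2 * n)
  obtain ⟨K', hK'⟩ := exists_diag h.indep h.sup fun n => q ^ (2 * n - d)
  have hR : ∀ n, ∀ u ∈ U n, (x - K) u = x u - q ^ (d - 2 * n) • u := fun n u hu => by
    rw [LinearMap.sub_apply, hK n u hu]
  have hL : ∀ n, ∀ u ∈ U n, (y - K') u = y u - q ^ (2 * n - d) • u := fun n u hu => by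
    rw [LinearMap.sub_apply, hK' n u hu]
  have hLR : LRData q (x - K) (y - K') U :=
    { neg := h.neg
      lower := fun n u hu => by rw [hR n u hu]; exact h.lower n u hu
      raise := fun n u hu => by rw [hL n u hu]; exact h.raise n u hu
      serreRL := h.toSplitDec.serre hq h.serre_xy hR hL
      serreLR := h.toSplitDec.swap.serre hq h.serre_yx
        (fun n u hu => by rw [hL _ u hu, show 2 * -n - d = -d - 2 * n by ring])
        (fun n u hu => by rw [hR _ u hu, show d - 2 * -n = 2 * n - -d by ring]) }
  refine ⟨x - K, y - K', hLR, fun n u hu => by rw [hR n u hu]; abel,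
    fun n u hu => by rw [hL n u hu]; abel, fun a u hu => ?_⟩
  have up : ∀ a, upOp q d y a u = ((y - K') ^ a) u := by
    intro a
    induction a with
    | zero => rfl
    | succ a ih =>
      have hm := hLR.raise_pow a hu
      rw [zero_add] at hm
      rw [upOp, Module.End.mul_apply, ih, pow_succ', Module.End.mul_apply, hL _ _ hm]
      simp
  have dn : ∀ (a : ℕ), ∀ w ∈ U a, dnOp q d x a w = ((x - K) ^ a) w := by
    intro a
    induction a with
    | zero => intro w _; rfl
    | succ a ih =>
      intro w hw
      have e : (x - q ^ (d - 2 * ((a : ℤ) + 1)) • 1) w = (x - K) w := by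
        rw [hR _ _ hw]; simp
      have hm := hLR.lower _ _ hw
      rw [show ((a + 1 : ℕ) : ℤ) - 1 = a by push_cast; ring] at hm
      rw [dnOp, Module.End.mul_apply, e, pow_succ, Module.End.mul_apply, ih _ hm]
  rw [up, dn]
  have hm := hLR.raise_pow a hu
  rwa [zero_add] at hm

/-- A common eigenvector in `U 0` generates an `x`, `y`-invariant subspace meeting `U 0` in a
line. -/
lemma Package.exists_invariant (hq : q ≠ 0) (hq1 : ∀ n : ℕ, 0 < n → q ^ n ≠ 1)
    (h : Package q d x y U) {u : M} (hu : u ∈ U 0) (γ : ℕ → F)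
    (hγ : ∀ a, dnOp q d x a (upOp q d y a u) = γ a • u) :
    ∃ N : Submodule F M, (∀ v ∈ N, x v ∈ N) ∧ (∀ v ∈ N, y v ∈ N) ∧ u ∈ N ∧
      N ⊓ U 0 ≤ Submodule.span F {u} := by
  obtain ⟨R, L, hLR, hx, hy, hC⟩ := h.exists_LR hq
  let G : Set M := {w | ∃ (n : ℕ) (z : List ℕ), z.length = 2 * n ∧ w = wordOp R L true z u}
  have hG : ∀ w ∈ G, ∃ k, w ∈ U k := by
    rintro w ⟨n, z, _, rfl⟩
    exact ⟨_, hLR.wordOp_mem true z hu⟩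
  have inv : ∀ f : Module.End F M, (∀ w ∈ G, f w ∈ Submodule.span F G) →
      ∀ v ∈ Submodule.span F G, f v ∈ Submodule.span F G := by
    intro f hf v hv
    exact (Submodule.span_le (p := (Submodule.span F G).comap f)).mpr hf hv
  refine ⟨Submodule.span F G, inv x ?_, inv y ?_, Submodule.subset_span ⟨0, [], rfl, rfl⟩, ?_⟩
  · intro w hw
    obtain ⟨k, hk⟩ := hG w hw
    rw [hx k w hk]
    refine Submodule.add_mem _ (Submodule.subset_span ?_)
      (Submodule.smul_mem _ _ (Submodule.subset_span hw))
    obtain ⟨n, z, hz, rfl⟩ := hw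
    exact ⟨n + 1, 1 :: 0 :: z, by simp; omega, by simp [wordOp]⟩
  · intro w hw
    obtain ⟨k, hk⟩ := hG w hw
    rw [hy k w hk]
    refine Submodule.add_mem _ (Submodule.subset_span ?_)
      (Submodule.smul_mem _ _ (Submodule.subset_span hw))
    obtain ⟨n, z, hz, rfl⟩ := hw
    exact ⟨n + 1, 0 :: 1 :: z, by simp; omega, by simp [wordOp]⟩
  · have hle : Submodule.span F G ≤ Submodule.span F {u} ⊔ ⨆ k ≠ (0 : ℤ), U k := by
      rw [Submodule.span_le]
      rintro w ⟨n, z, hz, rfl⟩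
      by_cases hn : netDeg true z = 0
      · exact Submodule.mem_sup_left (hLR.word_mem_span hq hq1 hu γ
          (fun a => by rw [← hC a u hu, hγ]) n z hz hn)
      · have := hLR.wordOp_mem true z hu
        rw [zero_add] at this
        exact Submodule.mem_sup_right (Submodule.mem_iSup_of_mem _
          (Submodule.mem_iSup_of_mem hn this))
    rintro v ⟨hv, hv0⟩
    obtain ⟨a, ha, b, hb, rfl⟩ := Submodule.mem_sup.mp (hle hv)
    have ha0 : a ∈ U 0 := (Submodule.span_singleton_le_iff_mem u _).mpr hu ha
    have hb0 : b ∈ U 0 := by simpa using Submodule.sub_mem _ hv0 ha0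
    rw [Submodule.disjoint_def.mp (h.indep 0) b hb0 hb, add_zero]
    exact ha

lemma exists_common_eigenvector [IsAlgClosed F] [FiniteDimensional F M] (C : ℕ → Module.End F M)
    {W : Submodule F M} (hW : W ≠ ⊥) (hinv : ∀ a, ∀ w ∈ W, C a w ∈ W)
    (hcomm : ∀ a b, ∀ w ∈ W, C a (C b w) = C b (C a w)) :
    ∃ w ∈ W, w ≠ 0 ∧ ∃ γ : ℕ → F, ∀ a, C a w = γ a • w := by
  let P : Set (Submodule F M) := {W' | W' ≤ W ∧ W' ≠ ⊥ ∧ ∀ a, ∀ w ∈ W', C a w ∈ W'}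
  obtain ⟨W', ⟨hle, hne, hin⟩, hmin⟩ :=
    (wellFounded_lt (α := Submodule F M)).has_min P ⟨W, le_rfl, hW, hinv⟩
  have key : ∀ a, ∃ μ : F, ∀ w ∈ W', C a w = μ • w := by
    intro a
    have : Nontrivial W' := Submodule.nontrivial_iff_ne_bot.mpr hne
    obtain ⟨μ, hμ⟩ := Module.End.exists_eigenvalue ((C a).restrict (hin a))
    obtain ⟨v, hv⟩ := hμ.exists_hasEigenvector
    have hv1 : C a v = μ • (v : M) := by
      have := hv.apply_eq_smul
      simpa using congrArg Subtype.val this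
    have hv0 : (v : M) ≠ 0 := fun h0 => hv.2 (Subtype.ext h0)
    refine ⟨μ, ?_⟩
    have hmem : W' ⊓ Module.End.eigenspace (C a) μ ∈ P := by
      refine ⟨inf_le_left.trans hle, ?_, ?_⟩
      · exact (Submodule.ne_bot_iff _).mpr
          ⟨v, ⟨v.2, Module.End.mem_eigenspace_iff.mpr hv1⟩, hv0⟩
      · rintro b w ⟨hw, hw'⟩
        refine ⟨hin b w hw, Module.End.mem_eigenspace_iff.mpr ?_⟩
        rw [hcomm a b w (hle hw), Module.End.mem_eigenspace_iff.mp hw', map_smul]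
    have heq : W' ⊓ Module.End.eigenspace (C a) μ = W' := by
      by_contra hcon
      exact hmin _ hmem (lt_of_le_of_ne inf_le_left hcon)
    intro w hw
    rw [← heq] at hw
    exact Module.End.mem_eigenspace_iff.mp hw.2
  choose γ hγ using key
  obtain ⟨w, hw, hw0⟩ := (Submodule.ne_bot_iff _).mp hne
  exact ⟨w, hle hw, hw0, γ, fun a => hγ a w hw⟩

lemma Package.exists_eigenvector [IsAlgClosed F] [FiniteDimensional F M] (hq : q ≠ 0)
    (hq1 : ∀ n : ℕ, 0 < n → q ^ n ≠ 1) (h : Package q d x y U) (h0 : U 0 ≠ ⊥) :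
    ∃ u ∈ U 0, u ≠ 0 ∧ ∃ γ : ℕ → F, ∀ a, dnOp q d x a (upOp q d y a u) = γ a • u := by
  obtain ⟨R, L, hLR, hx, hy, hC⟩ := h.exists_LR hq
  have hin : ∀ (a : ℕ), ∀ w ∈ U 0, (R ^ a) ((L ^ a) w) ∈ U 0 := by
    intro a w hw
    have := hLR.lower_pow a (hLR.raise_pow a hw)
    rwa [zero_add, sub_self] at this
  obtain ⟨u, hu, hu0, γ, hγ⟩ := exists_common_eigenvector (fun a => R ^ a * L ^ a) h0 hin
    (fun a b w hw => hLR.comm hq hq1 hw a b)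
  exact ⟨u, hu, hu0, γ, fun a => by rw [hC a u hu]; exact hγ a⟩

/-- If `x` and `y` act irreducibly, then `U 0` is a line. -/
lemma Package.exists_line [IsAlgClosed F] [FiniteDimensional F M] (hq : q ≠ 0)
    (hq1 : ∀ n : ℕ, 0 < n → q ^ n ≠ 1) (h : Package q d x y U) (h0 : U 0 ≠ ⊥)
    (hirr : ∀ W : Submodule F M, (∀ v ∈ W, x v ∈ W) → (∀ v ∈ W, y v ∈ W) → W = ⊥ ∨ W = ⊤) :
    ∃ u, u ≠ 0 ∧ U 0 = Submodule.span F {u} ∧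
      ∃ γ : ℕ → F, ∀ a, dnOp q d x a (upOp q d y a u) = γ a • u := by
  obtain ⟨u, hu, hu0, γ, hγ⟩ := h.exists_eigenvector hq hq1 h0
  obtain ⟨N, hNx, hNy, huN, hN⟩ := h.exists_invariant hq hq1 hu γ hγ
  have hNtop : N = ⊤ := (hirr N hNx hNy).resolve_left
    ((Submodule.ne_bot_iff _).mpr ⟨u, huN, hu0⟩)
  refine ⟨u, hu0, le_antisymm ?_ ((Submodule.span_singleton_le_iff_mem u _).mpr hu), γ, hγ⟩
  simpa [hNtop] using hN

variable {M' : Type} [AddCommGroup M'] [Module F M'] {x' y' : Module.End F M'}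
  {U' : ℤ → Submodule F M'}

lemma Serre.prodMap (h : Serre q x y) (h' : Serre q x' y') :
    Serre q (x.prodMap x') (y.prodMap y') := by
  unfold Serre at *
  refine LinearMap.ext fun v => Prod.ext ?_ ?_
  · have := LinearMap.congr_fun h v.1
    simpa [pow_succ, Module.End.mul_apply] using this
  · have := LinearMap.congr_fun h' v.2
    simpa [pow_succ, Module.End.mul_apply] using this

lemma Package.prod (h : Package q d x y U) (h' : Package q d x' y' U') :
    Package q d (x.prodMap x') (y.prodMap y') (fun n => (U n).prod (U' n)) where
  indep := by
    intro i
    have hle : (⨆ j, ⨆ (_ : j ≠ i), (U j).prod (U' j)) ≤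
        (⨆ j, ⨆ (_ : j ≠ i), U j).prod (⨆ j, ⨆ (_ : j ≠ i), U' j) := by
      refine iSup_le fun j => iSup_le fun hj => Submodule.prod_mono ?_ ?_
      · exact le_iSup_of_le j (le_iSup_of_le hj le_rfl)
      · exact le_iSup_of_le j (le_iSup_of_le hj le_rfl)
    rw [Submodule.disjoint_def]
    rintro v hv hv'
    have hv'' := hle hv'
    have e1 : v.1 = 0 := Submodule.disjoint_def.mp (h.indep i) _ hv.1 hv''.1
    have e2 : v.2 = 0 := Submodule.disjoint_def.mp (h'.indep i) _ hv.2 hv''.2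
    exact Prod.ext e1 e2
  sup := by
    have h1 : (⊤ : Submodule F M) ≤ (⨆ n, (U n).prod (U' n)).comap (LinearMap.inl F M M') := by
      rw [← h.sup]
      exact iSup_le fun n u hu => Submodule.mem_iSup_of_mem n ⟨hu, Submodule.zero_mem _⟩
    have h2 : (⊤ : Submodule F M') ≤ (⨆ n, (U n).prod (U' n)).comap (LinearMap.inr F M M') := by
      rw [← h'.sup]
      exact iSup_le fun n u hu => Submodule.mem_iSup_of_mem n ⟨Submodule.zero_mem _, hu⟩
    refine eq_top_iff.mpr fun v _ => ?_
    have m1 : v.1 ∈ (⊤ : Submodule F M) := trivial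
    have m2 : v.2 ∈ (⊤ : Submodule F M') := trivial
    have e : v = LinearMap.inl F M M' v.1 + LinearMap.inr F M M' v.2 := by simp
    rw [e]
    exact Submodule.add_mem _ (h1 m1) (h2 m2)
  lower n u hu := ⟨h.lower n _ hu.1, h'.lower n _ hu.2⟩
  raise n u hu := ⟨h.raise n _ hu.1, h'.raise n _ hu.2⟩
  neg n hn := by simp [h.neg n hn, h'.neg n hn]
  serre_xy := h.serre_xy.prodMap h'.serre_xy
  serre_yx := h.serre_yx.prodMap h'.serre_yx

lemma upOp_prodMap (a : ℕ) (v : M × M') :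
    upOp q d (y.prodMap y') a v = (upOp q d y a v.1, upOp q d y' a v.2) := by
  induction a with
  | zero => rfl
  | succ a ih => simp [upOp, ih, Module.End.mul_apply]

lemma dnOp_prodMap (a : ℕ) (v : M × M') :
    dnOp q d (x.prodMap x') a v = (dnOp q d x a v.1, dnOp q d x' a v.2) := by
  induction a generalizing v with
  | zero => rfl
  | succ a ih => simp [dnOp, ih, Module.End.mul_apply]

/-- Irreducible packages are determined by the eigenvalues of `dnOp q d x a * upOp q d y a` on
`U 0`: the invariant subspace of the product generated by `(v, v')` is the graph of an
isomorphism. -/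
lemma Package.exists_iso (hq : q ≠ 0)
    (hq1 : ∀ n : ℕ, 0 < n → q ^ n ≠ 1) (h : Package q d x y U) (h' : Package q d x' y' U')
    (hirr : ∀ W : Submodule F M, (∀ v ∈ W, x v ∈ W) → (∀ v ∈ W, y v ∈ W) → W = ⊥ ∨ W = ⊤)
    (hirr' : ∀ W : Submodule F M', (∀ v ∈ W, x' v ∈ W) → (∀ v ∈ W, y' v ∈ W) → W = ⊥ ∨ W = ⊤)
    {v : M} {v' : M'} (hv : v ∈ U 0) (hv0 : v ≠ 0) (hv' : v' ∈ U' 0) (hv0' : v' ≠ 0) (γ : ℕ → F)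
    (hγ : ∀ a, dnOp q d x a (upOp q d y a v) = γ a • v)
    (hγ' : ∀ a, dnOp q d x' a (upOp q d y' a v') = γ a • v') :
    ∃ ψ : M ≃ₗ[F] M', (∀ w, ψ (x w) = x' (ψ w)) ∧ ∀ w, ψ (y w) = y' (ψ w) := by
  obtain ⟨N, hNx, hNy, hN, hN0⟩ := (h.prod h').exists_invariant hq hq1 (u := (v, v')) ⟨hv, hv'⟩ γ
    (fun a => by rw [upOp_prodMap, dnOp_prodMap, hγ, hγ']; rfl)
  have hN0' : ∀ w ∈ N, w ∈ (U 0).prod (U' 0) → ∃ c : F, w = c • (v, v') := fun w hw hw' => by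
    obtain ⟨c, rfl⟩ := Submodule.mem_span_singleton.mp (hN0 ⟨hw, hw'⟩)
    exact ⟨c, rfl⟩
  -- `N` meets both factors trivially
  have k1 : ∀ w, (w, (0 : M')) ∈ N → w = 0 := by
    rcases hirr (N.comap (LinearMap.inl F M M')) (fun w hw => by simpa using hNx _ hw)
      (fun w hw => by simpa using hNy _ hw) with hb | ht
    · intro w hw
      have : w ∈ N.comap (LinearMap.inl F M M') := hw
      rwa [hb] at this
    · exfalso
      have hm : v ∈ N.comap (LinearMap.inl F M M') := by rw [ht]; trivial
      obtain ⟨c, hc⟩ := hN0' (v, 0) hm ⟨hv, Submodule.zero_mem _⟩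
      rw [Prod.smul_mk, Prod.mk.injEq] at hc
      rcases smul_eq_zero.mp hc.2.symm with h0 | h0
      · exact hv0 (by rw [hc.1, h0, zero_smul])
      · exact hv0' h0
  have k2 : ∀ w, ((0 : M), w) ∈ N → w = 0 := by
    rcases hirr' (N.comap (LinearMap.inr F M M')) (fun w hw => by simpa using hNx _ hw)
      (fun w hw => by simpa using hNy _ hw) with hb | ht
    · intro w hw
      have : w ∈ N.comap (LinearMap.inr F M M') := hw
      rwa [hb] at this
    · exfalso
      have hm : v' ∈ N.comap (LinearMap.inr F M M') := by rw [ht]; trivial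
      obtain ⟨c, hc⟩ := hN0' (0, v') hm ⟨Submodule.zero_mem _, hv'⟩
      rw [Prod.smul_mk, Prod.mk.injEq] at hc
      rcases smul_eq_zero.mp hc.1.symm with h0 | h0
      · exact hv0' (by rw [hc.2, h0, zero_smul])
      · exact hv0 h0
  -- and projects onto both
  have s1 : N.map (LinearMap.fst F M M') = ⊤ := by
    refine (hirr _ ?_ ?_).resolve_left ((Submodule.ne_bot_iff _).mpr ⟨v, ⟨_, hN, rfl⟩, hv0⟩)
    · rintro _ ⟨w, hw, rfl⟩; exact ⟨_, hNx w hw, rfl⟩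
    · rintro _ ⟨w, hw, rfl⟩; exact ⟨_, hNy w hw, rfl⟩
  have s2 : N.map (LinearMap.snd F M M') = ⊤ := by
    refine (hirr' _ ?_ ?_).resolve_left ((Submodule.ne_bot_iff _).mpr ⟨v', ⟨_, hN, rfl⟩, hv0'⟩)
    · rintro _ ⟨w, hw, rfl⟩; exact ⟨_, hNx w hw, rfl⟩
    · rintro _ ⟨w, hw, rfl⟩; exact ⟨_, hNy w hw, rfl⟩
  let p1 : N →ₗ[F] M := (LinearMap.fst F M M').comp N.subtype
  let p2 : N →ₗ[F] M' := (LinearMap.snd F M M').comp N.subtype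
  have b1 : Function.Bijective p1 := by
    refine ⟨LinearMap.ker_eq_bot.mp (LinearMap.ker_eq_bot'.mpr ?_), fun w => ?_⟩
    · rintro ⟨⟨a, b⟩, hab⟩ h0
      obtain rfl : a = 0 := h0
      obtain rfl := k2 b hab
      rfl
    · obtain ⟨w', hw', rfl⟩ := (s1 ▸ Submodule.mem_top : w ∈ N.map (LinearMap.fst F M M'))
      exact ⟨⟨w', hw'⟩, rfl⟩
  have b2 : Function.Bijective p2 := by
    refine ⟨LinearMap.ker_eq_bot.mp (LinearMap.ker_eq_bot'.mpr ?_), fun w => ?_⟩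
    · rintro ⟨⟨a, b⟩, hab⟩ h0
      obtain rfl : b = 0 := h0
      obtain rfl := k1 a hab
      rfl
    · obtain ⟨w', hw', rfl⟩ := (s2 ▸ Submodule.mem_top : w ∈ N.map (LinearMap.snd F M M'))
      exact ⟨⟨w', hw'⟩, rfl⟩
  let e1 := LinearEquiv.ofBijective p1 b1
  let e2 := LinearEquiv.ofBijective p2 b2
  have graph : ∀ n : N, (e1.symm.trans e2) (n : M × M').1 = (n : M × M').2 := by
    intro n
    have : e1.symm (n : M × M').1 = n := by rw [LinearEquiv.symm_apply_eq]; rfl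
    rw [LinearEquiv.trans_apply, this]; rfl
  refine ⟨e1.symm.trans e2, fun w => ?_, fun w => ?_⟩
  · obtain ⟨n, rfl⟩ := b1.2 w
    have g1 := graph n
    have g2 := graph ⟨_, hNx _ n.2⟩
    change (e1.symm.trans e2) (x (n : M × M').1) = x' ((e1.symm.trans e2) (n : M × M').1)
    rw [g1]
    exact g2
  · obtain ⟨n, rfl⟩ := b1.2 w
    have g1 := graph n
    have g2 := graph ⟨_, hNy _ n.2⟩
    change (e1.symm.trans e2) (y (n : M × M').1) = y' ((e1.symm.trans e2) (n : M × M').1)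
    rw [g1]
    exact g2

end Pack

variable {V : Type} [AddCommGroup V] [Module F V] {q : F}

/-! ### Diagonalizable operators with eigenvalues `q ^ (d - 2 n)` -/

lemma zpow_inj (hq : q ≠ 0) (hq1 : ∀ n : ℕ, 0 < n → q ^ n ≠ 1) {a b : ℤ} (h : q ^ a = q ^ b) :
    a = b := by
  have key : ∀ a b : ℤ, a < b → q ^ a = q ^ b → False := by
    intro a b hab h
    refine hq1 (b - a).toNat (by omega) ?_
    rw [← zpow_natCast, Int.toNat_of_nonneg (by omega), zpow_sub₀ hq, h,
      div_self (zpow_ne_zero _ hq)]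
  rcases lt_trichotomy a b with hab | hab | hab
  · exact (key _ _ hab h).elim
  · exact hab
  · exact (key _ _ hab h.symm).elim

/-- The eigenspace of `f` for `q ^ (d - 2 n)`. -/
def eig (q : F) (d : ℕ) (f : Module.End F V) (n : ℤ) : Submodule F V :=
  Module.End.eigenspace f (q ^ ((d : ℤ) - 2 * n))

/-- The sum of the eigenspaces `eig q d f n` with `n ∈ S`. -/
def esum (q : F) (d : ℕ) (f : Module.End F V) (S : Set ℤ) : Submodule F V :=
  ⨆ n ∈ S, eig q d f n

/-- `f` is diagonalizable, with all eigenvalues among `q ^ (d - 2 n)`, `0 ≤ n ≤ d`. -/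
structure DiagOp (q : F) (d : ℕ) (f : Module.End F V) : Prop where
  indep : iSupIndep (eig q d f)
  sup : ⨆ n, eig q d f n = ⊤
  out : ∀ n : ℤ, n < 0 ∨ (d : ℤ) < n → eig q d f n = ⊥
  all : ∀ μ, Module.End.eigenspace f μ ≠ ⊥ → ∃ n : ℤ, μ = q ^ ((d : ℤ) - 2 * n)

section Diag

variable {d : ℕ} {f : Module.End F V}

lemma mem_eig {n : ℤ} {v : V} : v ∈ eig q d f n ↔ f v = q ^ ((d : ℤ) - 2 * n) • v :=
  Module.End.mem_eigenspace_iff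

lemma eig_le_esum {S : Set ℤ} {n : ℤ} (hn : n ∈ S) : eig q d f n ≤ esum q d f S :=
  le_biSup (eig q d f) hn

lemma esum_mono {S T : Set ℤ} (h : S ⊆ T) : esum q d f S ≤ esum q d f T :=
  biSup_mono h

lemma esum_le {S : Set ℤ} {W : Submodule F V} (h : ∀ n ∈ S, ∀ v ∈ eig q d f n, v ∈ W) :
    esum q d f S ≤ W :=
  iSup₂_le h

lemma esum_map {V' : Type} [AddCommGroup V'] [Module F V'] {S : Set ℤ} {W : Submodule F V'}
    {g : V →ₗ[F] V'} (h : ∀ n ∈ S, ∀ v ∈ eig q d f n, g v ∈ W) {v : V} (hv : v ∈ esum q d f S) :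
    g v ∈ W :=
  esum_le (W := W.comap g) h hv

lemma DiagOp.disjoint (h : DiagOp q d f) {S T : Set ℤ} (hST : Disjoint S T) :
    Disjoint (esum q d f S) (esum q d f T) :=
  h.indep.disjoint_biSup_biSup hST

lemma DiagOp.sup_compl (h : DiagOp q d f) (S : Set ℤ) : esum q d f S ⊔ esum q d f Sᶜ = ⊤ := by
  rw [eq_top_iff, ← h.sup]
  refine iSup_le fun n => ?_
  by_cases hn : n ∈ S
  · exact (eig_le_esum hn).trans le_sup_left
  · exact (eig_le_esum (S := Sᶜ) hn).trans le_sup_right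

lemma DiagOp.of_sub_mem (h : DiagOp q d f) {S : Set ℤ} {m : ℤ} (hm : m ∈ S) {w : V}
    (hw : f w - q ^ ((d : ℤ) - 2 * m) • w ∈ esum q d f S) : w ∈ esum q d f S := by
  have hfS : ∀ T : Set ℤ, ∀ v ∈ esum q d f T, f v ∈ esum q d f T := fun T v hv =>
    esum_map (fun n hn v hv => by
      rw [mem_eig.mp hv]; exact Submodule.smul_mem _ _ (eig_le_esum hn hv)) hv
  have ht : w ∈ esum q d f S ⊔ esum q d f Sᶜ := by rw [h.sup_compl]; trivial
  obtain ⟨a, ha, b, hb, rfl⟩ := Submodule.mem_sup.mp ht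
  have hdis := Submodule.disjoint_def.mp (h.disjoint (disjoint_compl_right (a := S)))
  have hb2 : f b - q ^ ((d : ℤ) - 2 * m) • b = 0 := by
    refine hdis _ ?_ (Submodule.sub_mem _ (hfS _ _ hb) (Submodule.smul_mem _ _ hb))
    have := Submodule.sub_mem _ hw (Submodule.sub_mem _ (hfS _ _ ha)
      (Submodule.smul_mem _ (q ^ ((d : ℤ) - 2 * m)) ha))
    convert this using 1
    rw [map_add]; module
  have hbm : b ∈ eig q d f m := mem_eig.mpr (sub_eq_zero.mp hb2)
  rw [hdis b (eig_le_esum hm hbm) hb, add_zero]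
  exact ha

lemma sub_mem_esum {S T : Set ℤ} {m : ℤ} (hST : ∀ n ∈ S, n ≠ m → n ∈ T) {v : V}
    (hv : v ∈ esum q d f S) : f v - q ^ ((d : ℤ) - 2 * m) • v ∈ esum q d f T := by
  have := esum_map (g := f - q ^ ((d : ℤ) - 2 * m) • (1 : Module.End F V))
    (W := esum q d f T) (S := S) (f := f) (q := q) (d := d) ?_ hv
  · simpa using this
  · intro n hn u hu
    simp only [LinearMap.sub_apply, LinearMap.smul_apply, Module.End.one_apply]
    rw [mem_eig.mp hu]
    by_cases hnm : n = m
    · rw [hnm, sub_self]; exact Submodule.zero_mem _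
    · rw [← sub_smul]
      exact Submodule.smul_mem _ _ (eig_le_esum (hST n hn hnm) hu)

lemma DiagOp.mem_eig_of (h : DiagOp q d f) {n : ℤ} {v : V} (h1 : v ∈ esum q d f (Set.Iic n))
    (h2 : v ∈ esum q d f (Set.Ici n)) : v ∈ eig q d f n := by
  have d1 := sub_mem_esum (m := n) (T := Set.Iio n)
    (fun k hk hkn => lt_of_le_of_ne hk hkn) h1
  have d2 := sub_mem_esum (m := n) (T := Set.Ioi n)
    (fun k hk hkn => lt_of_le_of_ne hk (Ne.symm hkn)) h2
  have hdis : Disjoint (Set.Iio n) (Set.Ioi n) := by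
    rw [Set.disjoint_left]; intro a ha hb; simp at ha hb; omega
  exact mem_eig.mpr (sub_eq_zero.mp (Submodule.disjoint_def.mp (h.disjoint hdis) _ d1 d2))

lemma DiagOp.esum_bot (h : DiagOp q d f) {S : Set ℤ} (hS : ∀ n ∈ S, n < 0 ∨ (d : ℤ) < n) :
    esum q d f S = ⊥ :=
  eq_bot_iff.mpr (iSup₂_le fun n hn => by rw [h.out n (hS n hn)])

lemma DiagOp.esum_top (h : DiagOp q d f) {S : Set ℤ} (hS : ∀ n : ℤ, 0 ≤ n → n ≤ d → n ∈ S) :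
    esum q d f S = ⊤ := by
  rw [eq_top_iff, ← h.sup]
  refine iSup_le fun n => ?_
  by_cases hn : 0 ≤ n ∧ n ≤ d
  · exact eig_le_esum (hS n hn.1 hn.2)
  · rw [h.out n (by omega)]; exact bot_le

/-- An `f`-invariant subspace splits along the eigenspaces. -/
lemma DiagOp.split [FiniteDimensional F V] (h : DiagOp q d f) {W : Submodule F V}
    (hW : ∀ v ∈ W, f v ∈ W) (S : Set ℤ) :
    W = (W ⊓ esum q d f S) ⊔ (W ⊓ esum q d f Sᶜ) := by
  refine le_antisymm ?_ (sup_le inf_le_left inf_le_left)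
  have htop : ⨆ μ, f.genEigenspace μ 1 = ⊤ := by
    rw [eq_top_iff, ← h.sup]
    exact iSup_le fun n => le_iSup (fun μ => f.genEigenspace μ 1) (q ^ ((d : ℤ) - 2 * n))
  have := Submodule.eq_iSup_inf_genEigenspace 1 hW htop
  conv_lhs => rw [this]
  refine iSup_le fun μ => ?_
  by_cases hμ : Module.End.eigenspace f μ = ⊥
  · rw [show f.genEigenspace μ 1 = ⊥ from hμ]; simp
  · obtain ⟨n, rfl⟩ := h.all μ hμ
    by_cases hn : n ∈ S
    · exact le_sup_of_le_left (inf_le_inf_left _ (eig_le_esum hn))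
    · exact le_sup_of_le_right (inf_le_inf_left _ (eig_le_esum (S := Sᶜ) hn))

/-- A subspace which splits along `esum (Iic m)` and `esum (Ioi m)` for all `m` is
`f`-invariant. -/
lemma DiagOp.invariant_of_split (h : DiagOp q d f) {W : Submodule F V}
    (hW : ∀ m : ℤ, W ≤ (W ⊓ esum q d f (Set.Iic m)) ⊔ (W ⊓ esum q d f (Set.Ioi m))) :
    ∀ v ∈ W, f v ∈ W := by
  have key : ∀ m : ℕ, ∀ w ∈ W, w ∈ esum q d f (Set.Iic ((m : ℤ) - 1)) → f w ∈ W := by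
    intro m
    induction m with
    | zero =>
      intro w _ hw
      rw [h.esum_bot (fun n hn => by simp at hn; omega)] at hw
      rw [(Submodule.mem_bot F).mp hw, map_zero]
      exact Submodule.zero_mem _
    | succ m ih =>
      intro w hwW hw
      obtain ⟨a, ha, b, hb, rfl⟩ := Submodule.mem_sup.mp (hW ((m : ℤ) - 1) hwW)
      have hb1 : b ∈ esum q d f (Set.Iic (m : ℤ)) := by
        have h1 : a ∈ esum q d f (Set.Iic (m : ℤ)) :=
          esum_mono (Set.Iic_subset_Iic.mpr (by omega)) ha.2
        have h2 : a + b ∈ esum q d f (Set.Iic (m : ℤ)) := by simpa using hw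
        simpa using Submodule.sub_mem _ h2 h1
      have hb2 : b ∈ esum q d f (Set.Ici (m : ℤ)) :=
        esum_mono (fun n hn => by simp at hn ⊢; omega) hb.2
      rw [map_add, mem_eig.mp (h.mem_eig_of hb1 hb2)]
      exact Submodule.add_mem _ (ih a ha.1 ha.2) (Submodule.smul_mem _ _ hb.1)
  intro v hv
  refine key (d + 1) v hv ?_
  rw [h.esum_top (fun n h0 hd => by simp; omega)]
  trivial

open Polynomial in
/-- An operator annihilated by `∏ (X - q ^ (d - 2 n))` is diagonalizable, the roots being
distinct. -/
lemma DiagOp.of_aeval (hq : q ≠ 0) (hq1 : ∀ n : ℕ, 0 < n → q ^ n ≠ 1)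
    (h : aeval f (∏ n ∈ Finset.range (d + 1), (X - C (q ^ ((d : ℤ) - 2 * (n : ℤ))))) = 0) :
    DiagOp q d f := by
  have hinj : Function.Injective fun n : ℤ => q ^ ((d : ℤ) - 2 * n) := by
    intro a b hab
    have := zpow_inj hq hq1 hab
    omega
  have hroot : ∀ μ, Module.End.eigenspace f μ ≠ ⊥ →
      ∃ n : ℕ, n ≤ d ∧ μ = q ^ ((d : ℤ) - 2 * (n : ℤ)) := by
    intro μ hμ
    obtain ⟨v, hv, hv0⟩ := (Submodule.ne_bot_iff _).mp hμ
    have := Module.End.aeval_apply_of_hasEigenvector (p := ∏ n ∈ Finset.range (d + 1),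
      (X - C (q ^ ((d : ℤ) - 2 * (n : ℤ))))) (f := f) (μ := μ) (x := v) ⟨hv, hv0⟩
    rw [h, LinearMap.zero_apply] at this
    have h0 := (smul_eq_zero.mp this.symm).resolve_right hv0
    rw [eval_prod, Finset.prod_eq_zero_iff] at h0
    obtain ⟨n, hn, hn0⟩ := h0
    exact ⟨n, by simp at hn; omega, by simpa [sub_eq_zero] using hn0⟩
  refine ⟨(Module.End.eigenspaces_iSupIndep f).comp hinj, ?_, ?_, ?_⟩
  · have key : ∀ m : ℕ, LinearMap.ker (aeval f (∏ n ∈ Finset.range m,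
        (X - C (q ^ ((d : ℤ) - 2 * (n : ℤ)))))) ≤ ⨆ n, eig q d f n := by
      intro m
      induction m with
      | zero => simp [Module.End.one_eq_id]
      | succ m ih =>
        have hco : IsCoprime (∏ n ∈ Finset.range m, (X - C (q ^ ((d : ℤ) - 2 * (n : ℤ)))))
            (X - C (q ^ ((d : ℤ) - 2 * (m : ℤ)))) := by
          refine IsCoprime.prod_left fun n hn => ?_
          refine isCoprime_X_sub_C_of_isUnit_sub (IsUnit.mk0 _ (sub_ne_zero.mpr fun heq => ?_))
          have := hinj heq
          simp at hn this
          omega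
        rw [Finset.prod_range_succ, ← sup_ker_aeval_eq_ker_aeval_mul_of_coprime f hco]
        refine sup_le ih (le_trans ?_ (le_iSup (eig q d f) (m : ℤ)))
        intro v hv
        rw [mem_eig]
        simpa [sub_eq_zero] using hv
    have := key (d + 1)
    rw [h, LinearMap.ker_zero] at this
    exact top_le_iff.mp this
  · intro n hn
    by_contra hne
    obtain ⟨k, hk, hkn⟩ := hroot _ hne
    have := zpow_inj hq hq1 hkn
    omega
  · intro μ hμ
    obtain ⟨n, _, hn⟩ := hroot μ hμ
    exact ⟨n, hn⟩

end Diag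


/-! ### The four flags -/

/-- A `q`-Weyl pair of diagonalizable operators, as adjacent generators of `□_q` are. -/
structure WeylPair (q : F) (d : ℕ) (A B : Module.End F V) : Prop where
  rel : q • (A * B) - q⁻¹ • (B * A) = (q - q⁻¹) • (1 : Module.End F V)
  diagA : DiagOp q d A
  diagB : DiagOp q d B

section Weyl

variable {d : ℕ} {A B : Module.End F V}

lemma WeylPair.raise (hq : q ≠ 0) (h : WeylPair q d A B) {n : ℤ} {u : V} (hu : u ∈ eig q d A n) :
    B u - q ^ ((d : ℤ) - 2 * (d - n)) • u ∈ eig q d A (n + 1) := by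
  have hu' := mem_eig.mp hu
  have hr := LinearMap.congr_fun h.rel u
  simp only [LinearMap.sub_apply, LinearMap.smul_apply, Module.End.mul_apply,
    Module.End.one_apply, hu', map_smul] at hr
  rw [mem_eig, map_sub, map_smul, hu']
  have e1 : q ^ ((d : ℤ) - 2 * (n + 1)) = q⁻¹ * (q⁻¹ * q ^ ((d : ℤ) - 2 * n)) := by
    rw [← zpow_neg_one, ← zpow_add₀ hq, ← zpow_add₀ hq]; congr 1; ring
  have e2 : q ^ ((d : ℤ) - 2 * (d - n)) = (q ^ ((d : ℤ) - 2 * n))⁻¹ := by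
    rw [← zpow_neg]; congr 1; ring
  have ht : q ^ ((d : ℤ) - 2 * n) ≠ 0 := zpow_ne_zero _ hq
  rw [e1, e2]
  generalize q ^ ((d : ℤ) - 2 * n) = t at *
  have hA : A (B u) = q⁻¹ • (q⁻¹ • t • B u + (q - q⁻¹) • u) := by
    rw [← hr, add_sub_cancel, smul_smul, inv_mul_cancel₀ hq, one_smul]
  rw [hA]
  simp only [smul_sub, smul_add, smul_smul, sub_smul]
  have c1 : t⁻¹ * t = 1 := inv_mul_cancel₀ ht
  have c2 : q⁻¹ * (q⁻¹ * t) * t⁻¹ = q⁻¹ * q⁻¹ := by field_simp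
  rw [c1, c2]
  simp only [inv_mul_cancel₀ hq]
  module

lemma WeylPair.lower (hq : q ≠ 0) (h : WeylPair q d A B) {n : ℤ} {u : V} (hu : u ∈ eig q d B n) :
    A u - q ^ ((d : ℤ) - 2 * (d - n)) • u ∈ eig q d B (n - 1) := by
  have hu' := mem_eig.mp hu
  have hr := LinearMap.congr_fun h.rel u
  simp only [LinearMap.sub_apply, LinearMap.smul_apply, Module.End.mul_apply,
    Module.End.one_apply, hu', map_smul] at hr
  rw [mem_eig, map_sub, map_smul, hu']
  have e1 : q ^ ((d : ℤ) - 2 * (n - 1)) = q * (q * q ^ ((d : ℤ) - 2 * n)) := by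
    rw [← mul_assoc, ← pow_two, ← zpow_natCast, ← zpow_add₀ hq]; congr 1; push_cast; ring
  have e2 : q ^ ((d : ℤ) - 2 * (d - n)) = (q ^ ((d : ℤ) - 2 * n))⁻¹ := by
    rw [← zpow_neg]; congr 1; ring
  have ht : q ^ ((d : ℤ) - 2 * n) ≠ 0 := zpow_ne_zero _ hq
  rw [e1, e2]
  generalize q ^ ((d : ℤ) - 2 * n) = t at *
  have hA : B (A u) = q • (q • t • A u - (q - q⁻¹) • u) := by
    rw [← hr]
    simp only [smul_sub, smul_smul, mul_inv_cancel₀ hq]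
    module
  rw [hA]
  simp only [smul_sub, smul_smul, sub_smul]
  have c1 : t⁻¹ * t = 1 := inv_mul_cancel₀ ht
  have c2 : q * (q * t) * t⁻¹ = q * q := by field_simp
  rw [c1, c2]
  simp only [mul_inv_cancel₀ hq]
  module

/-- The descending eigenspace flag of `A` is the ascending eigenspace flag of `B`. -/
lemma WeylPair.flag_eq (hq : q ≠ 0) (h : WeylPair q d A B) (m : ℤ) :
    esum q d B (Set.Iic m) = esum q d A (Set.Ici (d - m)) := by
  have h1 : ∀ k : ℕ, ∀ n : ℤ, n = d + 1 - k →
      eig q d A n ≤ esum q d B (Set.Iic ((d : ℤ) - n)) := by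
    intro k
    induction k with
    | zero => intro n hn; rw [h.diagA.out n (by omega)]; exact bot_le
    | succ k ih =>
      intro n hn u hu
      refine h.diagB.of_sub_mem (m := d - n) (Set.mem_Iic.mpr le_rfl) ?_
      exact esum_mono (Set.Iic_subset_Iic.mpr (by omega))
        (ih (n + 1) (by push_cast at hn; omega) (h.raise hq hu))
  have h2 : ∀ k : ℕ, ∀ n : ℤ, n = (k : ℤ) - 1 →
      eig q d B n ≤ esum q d A (Set.Ici ((d : ℤ) - n)) := by
    intro k
    induction k with
    | zero => intro n hn; rw [h.diagB.out n (by omega)]; exact bot_le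
    | succ k ih =>
      intro n hn u hu
      refine h.diagA.of_sub_mem (m := d - n) (Set.mem_Ici.mpr le_rfl) ?_
      exact esum_mono (Set.Ici_subset_Ici.mpr (by omega))
        (ih (n - 1) (by push_cast at hn; omega) (h.lower hq hu))
  refine le_antisymm (esum_le fun n hn v hv => ?_) (esum_le fun n hn v hv => ?_)
  · by_cases h0 : n < 0
    · rw [h.diagB.out n (by omega)] at hv
      rw [(Submodule.mem_bot F).mp hv]; exact Submodule.zero_mem _
    · exact esum_mono (Set.Ici_subset_Ici.mpr (by simp at hn; omega))
        (h2 (n + 1).toNat n (by omega) hv)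
  · by_cases h0 : (d : ℤ) < n
    · rw [h.diagA.out n (by omega)] at hv
      rw [(Submodule.mem_bot F).mp hv]; exact Submodule.zero_mem _
    · exact esum_mono (Set.Iic_subset_Iic.mpr (by simp at hn; omega))
        (h1 ((d : ℤ) + 1 - n).toNat n (by omega) hv)

end Weyl

/-- An irreducible module of type `1` and diameter `d`, given by the action `x` of the generators.
The condition on the eigenvalues is expressed by polynomials, a form which is stable under
transposition; `ne` makes `q ^ d` an eigenvalue. -/
structure BoxMod (q : F) (d : ℕ) (x : ZMod 4 → Module.End F V) : Prop where
  weyl : ∀ i, q • (x i * x (i + 1)) - q⁻¹ • (x (i + 1) * x i) = (q - q⁻¹) • (1 : Module.End F V)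
  serre : ∀ i, Serre q (x i) (x (i + 2))
  ann : ∀ i, Polynomial.aeval (x i) (∏ n ∈ Finset.range (d + 1),
    (Polynomial.X - Polynomial.C (q ^ ((d : ℤ) - 2 * (n : ℤ))))) = 0
  ne : ∀ i, Polynomial.aeval (x i) (∏ n ∈ Finset.range d,
    (Polynomial.X - Polynomial.C (q ^ ((d : ℤ) - 2 * ((n + 1 : ℕ) : ℤ))))) ≠ 0
  irr : ∀ W : Submodule F V, (∀ i, ∀ v ∈ W, x i v ∈ W) → W = ⊥ ∨ W = ⊤

/-- The flag attached to `i`: the sum of the first eigenspaces of `x i`, which is also the sum of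
the last eigenspaces of `x (i - 1)`. -/
def flag (q : F) (d : ℕ) (x : ZMod 4 → Module.End F V) (i : ZMod 4) (m : ℤ) : Submodule F V :=
  esum q d (x i) (Set.Iic m)

section Box

variable {d : ℕ} {x : ZMod 4 → Module.End F V}

lemma flag_mono {i : ZMod 4} {m n : ℤ} (h : m ≤ n) : flag q d x i m ≤ flag q d x i n :=
  esum_mono (Set.Iic_subset_Iic.mpr h)

/-- The standing assumptions: `q` is nonzero and not a root of unity, and `x` is a module. -/
structure BoxHyp (q : F) (d : ℕ) (x : ZMod 4 → Module.End F V) : Prop extends BoxMod q d x where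
  hq : q ≠ 0
  hq1 : ∀ n : ℕ, 0 < n → q ^ n ≠ 1

lemma BoxHyp.diag (h : BoxHyp q d x) (i : ZMod 4) : DiagOp q d (x i) :=
  DiagOp.of_aeval h.hq h.hq1 (h.ann i)

lemma BoxHyp.pair (h : BoxHyp q d x) (i : ZMod 4) : WeylPair q d (x i) (x (i + 1)) :=
  ⟨h.weyl i, h.diag i, h.diag (i + 1)⟩

lemma BoxHyp.eig_zero_ne (h : BoxHyp q d x) (i : ZMod 4) : eig q d (x i) 0 ≠ ⊥ := by
  intro h0
  refine h.ne i (LinearMap.ext fun v => ?_)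
  have ha := h.ann i
  rw [Finset.prod_range_succ', mul_comm, map_mul] at ha
  have hv := LinearMap.congr_fun ha v
  rw [Module.End.mul_apply] at hv
  have : Polynomial.aeval (x i) (∏ n ∈ Finset.range d,
    (Polynomial.X - Polynomial.C (q ^ ((d : ℤ) - 2 * ((n + 1 : ℕ) : ℤ))))) v ∈
      eig q d (x i) 0 := by
    rw [mem_eig]
    rw [map_sub, Polynomial.aeval_X, Polynomial.aeval_C, LinearMap.sub_apply,
      Module.algebraMap_end_apply, LinearMap.zero_apply, sub_eq_zero] at hv
    exact hv
  rw [h0] at this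
  exact (Submodule.mem_bot F).mp this

lemma BoxHyp.flag_succ (h : BoxHyp q d x) (i : ZMod 4) (m : ℤ) :
    flag q d x (i + 1) m = esum q d (x i) (Set.Ici (d - m)) :=
  (h.pair i).flag_eq h.hq m

lemma BoxHyp.flag_bot (h : BoxHyp q d x) (i : ZMod 4) {m : ℤ} (hm : m < 0) :
    flag q d x i m = ⊥ :=
  (h.diag i).esum_bot fun n hn => by simp at hn; omega

lemma BoxHyp.flag_top (h : BoxHyp q d x) (i : ZMod 4) {m : ℤ} (hm : d ≤ m) :
    flag q d x i m = ⊤ :=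
  (h.diag i).esum_top fun n _ hn => by simp; omega

lemma BoxHyp.act0 (_ : BoxHyp q d x) (i : ZMod 4) {m : ℤ} {v : V} (hv : v ∈ flag q d x i m) :
    x i v - q ^ ((d : ℤ) - 2 * m) • v ∈ flag q d x i (m - 1) :=
  sub_mem_esum (fun n hn hnm => by simp at hn ⊢; omega) hv

lemma BoxHyp.act3 (h : BoxHyp q d x) (i : ZMod 4) {m : ℤ} {v : V}
    (hv : v ∈ flag q d x (i + 1) m) :
    x i v - q ^ (2 * m - (d : ℤ)) • v ∈ flag q d x (i + 1) (m - 1) := by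
  rw [h.flag_succ] at hv ⊢
  have := sub_mem_esum (m := d - m) (T := Set.Ici ((d : ℤ) - (m - 1)))
    (fun n hn hnm => by simp at hn ⊢; omega) hv
  rwa [show (d : ℤ) - 2 * (d - m) = 2 * m - d by ring] at this

lemma BoxHyp.act1 (h : BoxHyp q d x) (i : ZMod 4) {m : ℤ} {v : V} (hv : v ∈ flag q d x i m) :
    x (i + 1) v ∈ flag q d x i (m + 1) := by
  refine esum_map (fun n hn u hu => ?_) hv
  have h1 := (h.pair i).raise h.hq hu
  have h2 : u ∈ flag q d x i (m + 1) := eig_le_esum (by simp at hn ⊢; omega) hu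
  have h3 := eig_le_esum (S := Set.Iic (m + 1)) (by simp at hn ⊢; omega) h1
  have := Submodule.add_mem _ h3 (Submodule.smul_mem _ (q ^ ((d : ℤ) - 2 * (d - n))) h2)
  rwa [sub_add_cancel] at this

lemma BoxHyp.act2 (h : BoxHyp q d x) (i : ZMod 4) {m : ℤ} {v : V}
    (hv : v ∈ flag q d x (i + 2) m) : x i v ∈ flag q d x (i + 2) (m + 1) := by
  rw [show i + 2 = i + 1 + 1 by ring, h.flag_succ] at hv ⊢
  refine esum_map (fun n hn u hu => ?_) hv
  have h1 := (h.pair i).lower h.hq hu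
  have h2 : u ∈ esum q d (x (i + 1)) (Set.Ici ((d : ℤ) - (m + 1))) :=
    eig_le_esum (by simp at hn ⊢; omega) hu
  have h3 := eig_le_esum (S := Set.Ici ((d : ℤ) - (m + 1))) (by simp at hn ⊢; omega) h1
  have := Submodule.add_mem _ h3 (Submodule.smul_mem _ (q ^ ((d : ℤ) - 2 * (d - n))) h2)
  rwa [sub_add_cancel] at this

lemma add_two_two (i : ZMod 4) : i + 2 + 2 = i := by revert i; decide

lemma add_three_one (i : ZMod 4) : i + 3 + 1 = i := by revert i; decide

/-- The sums of intersections of the flags attached to `i` and `i + 2` are submodules. -/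
lemma BoxHyp.opp_invariant (h : BoxHyp q d x) (i : ZMod 4) (c : ℤ) (j : ZMod 4) :
    ∀ v ∈ ⨆ m, flag q d x i m ⊓ flag q d x (i + 2) (c - m),
      x j v ∈ ⨆ m, flag q d x i m ⊓ flag q d x (i + 2) (c - m) := by
  have mem : ∀ {m n : ℤ} {v : V}, m + n = c → v ∈ flag q d x i m → v ∈ flag q d x (i + 2) n →
      v ∈ ⨆ m, flag q d x i m ⊓ flag q d x (i + 2) (c - m) := by
    intro m n v hmn h1 h2
    obtain rfl : n = c - m := by omega
    exact Submodule.mem_iSup_of_mem m ⟨h1, h2⟩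
  have shift : ∀ (a : F) {w v : V}, w - a • v ∈ ⨆ m, flag q d x i m ⊓ flag q d x (i + 2) (c - m) →
      v ∈ ⨆ m, flag q d x i m ⊓ flag q d x (i + 2) (c - m) →
      w ∈ ⨆ m, flag q d x i m ⊓ flag q d x (i + 2) (c - m) := by
    intro a w v h1 h2
    have := Submodule.add_mem _ h1 (Submodule.smul_mem _ a h2)
    rwa [sub_add_cancel] at this
  intro v hv
  refine (iSup_le (fun m => ?_) : (⨆ m, flag q d x i m ⊓ flag q d x (i + 2) (c - m)) ≤
    (⨆ m, flag q d x i m ⊓ flag q d x (i + 2) (c - m)).comap (x j)) hv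
  rintro v ⟨h1, h2⟩
  have hv := mem (by ring) h1 h2
  have up : ∀ {k : ZMod 4} {n n' : ℤ} {w : V} (a : F), n ≤ n' → x j v ∈ flag q d x k n' →
      w = v → v ∈ flag q d x k n → x j v - a • w ∈ flag q d x k n' := by
    rintro k n n' _ a hn hx rfl hw
    exact Submodule.sub_mem _ hx (Submodule.smul_mem _ _ (flag_mono hn hw))
  have hj : ∀ i j : ZMod 4, j = i ∨ j = i + 3 ∨ j = i + 2 ∨ j = i + 1 := by decide
  rw [Submodule.mem_comap]
  rcases hj i j with rfl | rfl | rfl | rfl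
  · exact shift _ (mem (m := m - 1) (n := c - m + 1) (by ring) (h.act0 j h1)
      (up _ (by omega) (h.act2 j h2) rfl h2)) hv
  · have a3 := h.act3 (i + 3) (m := m) (v := v) (by rwa [add_three_one])
    rw [add_three_one] at a3
    have a1 := h.act1 (i + 2) h2
    rw [show i + 2 + 1 = i + 3 by ring] at a1
    exact shift _ (mem (m := m - 1) (n := c - m + 1) (by ring) a3
      (up _ (by omega) a1 rfl h2)) hv
  · have a2 := h.act2 (i + 2) (m := m) (v := v) (by rwa [add_two_two])
    rw [add_two_two] at a2
    exact shift _ (mem (m := m + 1) (n := c - m - 1) (by ring)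
      (up _ (by omega) a2 rfl h1) (h.act0 (i + 2) h2)) hv
  · have a3 := h.act3 (i + 1) (m := c - m) (v := v)
      (by rwa [show i + 1 + 1 = i + 2 by ring])
    rw [show i + 1 + 1 = i + 2 by ring] at a3
    exact shift _ (mem (m := m + 1) (n := c - m - 1) (by ring)
      (up _ (by omega) (h.act1 i h1) rfl h1) a3) hv

lemma BoxHyp.flag_zero (h : BoxHyp q d x) (i : ZMod 4) : flag q d x i 0 = eig q d (x i) 0 := by
  refine le_antisymm (esum_le fun n hn v hv => ?_) (eig_le_esum (by simp))
  by_cases h0 : n = 0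
  · rwa [h0] at hv
  · rw [(h.diag i).out n (by simp at hn; omega)] at hv
    rw [(Submodule.mem_bot F).mp hv]; exact Submodule.zero_mem _

lemma BoxHyp.disjoint_succ (h : BoxHyp q d x) (i : ZMod 4) {m n : ℤ} (hmn : m + n < d) :
    Disjoint (flag q d x i m) (flag q d x (i + 1) n) := by
  rw [h.flag_succ]
  refine (h.diag i).disjoint ?_
  rw [Set.disjoint_left]
  intro a ha hb
  simp at ha hb
  omega

lemma BoxHyp.flag_ne_top (h : BoxHyp q d x) (i : ZMod 4) : flag q d x i (d - 1) ≠ ⊤ := by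
  intro ht
  have := h.disjoint_succ i (m := d - 1) (n := 0) (by omega)
  rw [ht, top_disjoint, h.flag_zero] at this
  exact h.eig_zero_ne (i + 1) this

/-- Opposite flags meet trivially in total degree less than `d`: otherwise the sum of the
intersections in that degree, a submodule, would be everything, yet it lies in a proper step of
a flag. -/
lemma BoxHyp.disjoint_opp (h : BoxHyp q d x) (i : ZMod 4) {m n : ℤ} (hmn : m + n < d) :
    Disjoint (flag q d x i m) (flag q d x (i + 2) n) := by
  have hb : (⨆ m, flag q d x i m ⊓ flag q d x (i + 2) ((d : ℤ) - 1 - m)) = ⊥ := by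
    refine (h.irr _ (fun j => h.opp_invariant i _ j)).resolve_right fun ht => ?_
    refine h.flag_ne_top (i + 2) (eq_top_iff.mpr (ht ▸ iSup_le fun m => ?_))
    by_cases hm : m < 0
    · rw [h.flag_bot i hm, bot_inf_eq]; exact bot_le
    · exact inf_le_right.trans (flag_mono (by omega))
  rw [disjoint_iff, eq_bot_iff, ← hb]
  exact le_iSup_of_le m (inf_le_inf_left _ (flag_mono (by omega)))

/-- The split decomposition attached to the opposite flags `i` and `i + 2`. -/
def splitU (q : F) (d : ℕ) (x : ZMod 4 → Module.End F V) (i : ZMod 4) (n : ℤ) : Submodule F V :=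
  flag q d x i n ⊓ flag q d x (i + 2) (d - n)

lemma BoxHyp.splitU_zero (h : BoxHyp q d x) (i : ZMod 4) :
    splitU q d x i 0 = eig q d (x i) 0 := by
  rw [splitU, h.flag_zero, h.flag_top (i + 2) (by omega), inf_top_eq]

lemma BoxHyp.package (h : BoxHyp q d x) (i : ZMod 4) :
    Package q d (x i) (x (i + 2)) (splitU q d x i) where
  indep := by
    intro n
    have hle : (⨆ j, ⨆ (_ : j ≠ n), splitU q d x i j) ≤
        flag q d x i (n - 1) ⊔ flag q d x (i + 2) (d - n - 1) := by
      refine iSup₂_le fun j hj => ?_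
      rcases lt_or_gt_of_ne hj with hlt | hgt
      · exact le_sup_of_le_left (inf_le_left.trans (flag_mono (by omega)))
      · exact le_sup_of_le_right (inf_le_right.trans (flag_mono (by omega)))
    rw [Submodule.disjoint_def]
    rintro v ⟨hv1, hv2⟩ hv
    obtain ⟨a, ha, b, hb, rfl⟩ := Submodule.mem_sup.mp (hle hv)
    have hb' : b ∈ flag q d x i n := by
      simpa using Submodule.sub_mem _ hv1 (flag_mono (by omega) ha)
    obtain rfl : b = 0 := Submodule.disjoint_def.mp
      (h.disjoint_opp i (m := n) (n := d - n - 1) (by omega)) b hb' hb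
    rw [add_zero] at hv2 ⊢
    exact Submodule.disjoint_def.mp
      (h.disjoint_opp i (m := n - 1) (n := d - n) (by omega)) a ha hv2
  sup := by
    refine (h.irr _ (fun j => h.opp_invariant i d j)).resolve_left fun hb => ?_
    have : splitU q d x i 0 ≤ ⊥ := hb ▸ le_iSup (splitU q d x i) 0
    rw [h.splitU_zero] at this
    exact h.eig_zero_ne i (eq_bot_iff.mpr this)
  lower n u hu := by
    refine ⟨h.act0 i hu.1, Submodule.sub_mem _ ?_ (Submodule.smul_mem _ _ ?_)⟩
    · have := h.act2 i hu.2
      rwa [show (d : ℤ) - n + 1 = d - (n - 1) by ring] at this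
    · exact flag_mono (by omega) hu.2
  raise n u hu := by
    refine ⟨Submodule.sub_mem _ ?_ (Submodule.smul_mem _ _ ?_), ?_⟩
    · have := h.act2 (i + 2) (m := n) (v := u) (by rw [add_two_two]; exact hu.1)
      rwa [add_two_two] at this
    · exact flag_mono (by omega) hu.1
    · have := h.act0 (i + 2) hu.2
      rwa [show (d : ℤ) - 2 * (d - n) = 2 * n - d by ring,
        show (d : ℤ) - n - 1 = d - (n + 1) by ring] at this
  neg n hn := by rw [splitU, h.flag_bot i hn, bot_inf_eq]
  serre_xy := h.serre i
  serre_yx := by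
    have := h.serre (i + 2)
    rwa [add_two_two] at this

end Box


/-! ### Irreducibility for opposite generators, and uniqueness of the other two -/

section Box2

variable {d : ℕ} {x : ZMod 4 → Module.End F V}

/-- A subspace invariant under `x i` and `x (i + 2)` is invariant under `x (i + 1)`: comparing the
dimensions of its intersections with the four flags shows that it splits along the eigenspaces of
`x (i + 1)`. -/
lemma BoxHyp.invariant_succ [FiniteDimensional F V] (h : BoxHyp q d x) (i : ZMod 4)
    {W : Submodule F V} (h1 : ∀ v ∈ W, x i v ∈ W) (h3 : ∀ v ∈ W, x (i + 2) v ∈ W) :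
    ∀ v ∈ W, x (i + 1) v ∈ W := by
  have hadd : ∀ A B : Submodule F V, Disjoint A B → Module.finrank F (W ⊓ A : Submodule F V) +
      Module.finrank F (W ⊓ B : Submodule F V) =
      Module.finrank F ((W ⊓ A) ⊔ (W ⊓ B) : Submodule F V) := by
    intro A B hAB
    rw [← Submodule.finrank_sup_add_finrank_inf_eq,
      (hAB.mono inf_le_right inf_le_right).eq_bot, finrank_bot, add_zero]
  have hle : ∀ A B : Submodule F V, Disjoint A B → Module.finrank F (W ⊓ A : Submodule F V) +
      Module.finrank F (W ⊓ B : Submodule F V) ≤ Module.finrank F W := by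
    intro A B hAB
    rw [hadd A B hAB]
    exact Submodule.finrank_mono (sup_le inf_le_left inf_le_left)
  have compl : ∀ (j : ZMod 4) (m : ℤ),
      flag q d x (j + 1) (d - 1 - m) = esum q d (x j) (Set.Iic m)ᶜ := by
    intro j m
    rw [h.flag_succ]
    congr 1
    ext n
    simp
    omega
  have heq : ∀ j : ZMod 4, (∀ v ∈ W, x j v ∈ W) → ∀ m : ℤ,
      Module.finrank F (W ⊓ flag q d x j m : Submodule F V) +
      Module.finrank F (W ⊓ flag q d x (j + 1) (d - 1 - m) : Submodule F V) =
        Module.finrank F W := by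
    intro j hj m
    rw [hadd _ _ (h.disjoint_succ j (by omega)), compl, flag, ← (h.diag j).split hj (Set.Iic m)]
  refine (h.diag (i + 1)).invariant_of_split fun m => ?_
  have e23 : i + 2 + 1 = i + 3 := by ring
  have e12 : i + 1 + 1 = i + 2 := by ring
  have e13 : i + 1 + 2 = i + 3 := by ring
  have a1 := heq i h1 m
  have a2 := heq i h1 (d - 1 - m)
  have a3 := heq (i + 2) h3 m
  have a4 := heq (i + 2) h3 (d - 1 - m)
  have b1 := hle _ _ (h.disjoint_opp i (m := m) (n := d - 1 - m) (by omega))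
  have b2 := hle _ _ (h.disjoint_opp i (m := d - 1 - m) (n := m) (by omega))
  have b3 := hle _ _ (h.disjoint_opp (i + 1) (m := m) (n := d - 1 - m) (by omega))
  have b4 := hle _ _ (h.disjoint_opp (i + 1) (m := d - 1 - m) (n := m) (by omega))
  have c1 := hle _ _ (h.disjoint_succ (i + 1) (m := m) (n := d - 1 - m) (by omega))
  have c3 := hle _ _ (h.disjoint_succ (i + 3) (m := m) (n := d - 1 - m) (by omega))
  have c4 := hle _ _ (h.disjoint_succ (i + 3) (m := d - 1 - m) (n := m) (by omega))
  have key := hadd _ _ (h.disjoint_succ (i + 1) (m := m) (n := d - 1 - m) (by omega))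
  rw [sub_sub_cancel] at a2 a4
  rw [e23] at a3 a4
  rw [e13] at b3 b4
  rw [add_three_one] at c3 c4
  have hfin : W = (W ⊓ flag q d x (i + 1) m) ⊔ (W ⊓ flag q d x (i + 1 + 1) (d - 1 - m)) := by
    refine (Submodule.eq_of_le_of_finrank_le (sup_le inf_le_left inf_le_left) ?_).symm
    rw [← key]
    rw [e12] at c1 ⊢
    omega
  rw [compl, Set.compl_Iic] at hfin
  exact hfin.le

lemma BoxHyp.irr_pair [FiniteDimensional F V] (h : BoxHyp q d x) (i : ZMod 4)
    (W : Submodule F V) (h1 : ∀ v ∈ W, x i v ∈ W) (h3 : ∀ v ∈ W, x (i + 2) v ∈ W) :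
    W = ⊥ ∨ W = ⊤ := by
  refine h.irr W fun j => ?_
  have hj : ∀ i j : ZMod 4, j = i ∨ j = i + 1 ∨ j = i + 2 ∨ j = i + 2 + 1 := by decide
  rcases hj i j with rfl | rfl | rfl | rfl
  · exact h1
  · exact h.invariant_succ i h1 h3
  · exact h3
  · exact h.invariant_succ (i + 2) h3 (by rwa [add_two_two])

/-- An operator which `q`-commutes with both `x i` and `x (i + 2)` in the opposite senses of the
two Weyl relations involving `x (i + 1)` vanishes. -/
lemma BoxHyp.eq_zero_of_qcomm (h : BoxHyp q d x) (i : ZMod 4) {D : Module.End F V}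
    (h1 : q • (x i * D) = q⁻¹ • (D * x i)) (h2 : q • (D * x (i + 2)) = q⁻¹ • (x (i + 2) * D)) :
    D = 0 := by
  have hq := h.hq
  have m1 : ∀ {m : ℤ} {v : V}, v ∈ flag q d x (i + 1) m → D v ∈ flag q d x (i + 1) (m - 1) := by
    intro m v hv
    rw [h.flag_succ] at hv ⊢
    refine esum_map (fun n hn u hu => ?_) hv
    refine eig_le_esum (n := n + 1) (by simp at hn ⊢; omega) ?_
    have := LinearMap.congr_fun h1 u
    simp only [LinearMap.smul_apply, Module.End.mul_apply, mem_eig.mp hu, map_smul] at this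
    have e1 : q ^ ((d : ℤ) - 2 * (n + 1)) = q⁻¹ * (q⁻¹ * q ^ ((d : ℤ) - 2 * n)) := by
      rw [← zpow_neg_one, ← zpow_add₀ hq, ← zpow_add₀ hq]; congr 1; ring
    rw [mem_eig, e1, mul_smul, mul_smul, ← this, smul_smul, inv_mul_cancel₀ hq, one_smul]
  have m2 : ∀ {m : ℤ} {v : V}, v ∈ flag q d x (i + 2) m → D v ∈ flag q d x (i + 2) (m - 1) := by
    intro m v hv
    refine esum_map (fun n hn u hu => ?_) hv
    refine eig_le_esum (n := n - 1) (by simp at hn ⊢; omega) ?_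
    have := LinearMap.congr_fun h2 u
    simp only [LinearMap.smul_apply, Module.End.mul_apply, mem_eig.mp hu, map_smul] at this
    have e1 : q ^ ((d : ℤ) - 2 * (n - 1)) = q * (q * q ^ ((d : ℤ) - 2 * n)) := by
      rw [← mul_assoc, ← pow_two, ← zpow_natCast, ← zpow_add₀ hq]; congr 1; push_cast; ring
    rw [mem_eig, e1, mul_smul, mul_smul, this, smul_smul, mul_inv_cancel₀ hq, one_smul]
  refine ext_of_iSup (h.diag (i + 1)).sup fun n u hu => ?_
  have u1 : u ∈ flag q d x (i + 1) n := eig_le_esum (by simp) hu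
  have u2 : u ∈ flag q d x (i + 2) (d - n) := by
    rw [show i + 2 = i + 1 + 1 by ring, h.flag_succ]
    exact eig_le_esum (by simp) hu
  have hd := h.disjoint_succ (i + 1) (m := n - 1) (n := d - n - 1) (by omega)
  rw [show i + 1 + 1 = i + 2 by ring] at hd
  exact Submodule.disjoint_def.mp hd _ (m1 u1) (m2 u2)

/-- An intertwiner of `x i` and `x (i + 2)` also intertwines `x (i + 1)`. -/
lemma BoxHyp.intertwine_succ {V' : Type} [AddCommGroup V'] [Module F V']
    {x' : ZMod 4 → Module.End F V'} (h : BoxHyp q d x) (h' : BoxHyp q d x') (ψ : V ≃ₗ[F] V')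
    (i : ZMod 4) (h1 : ∀ v, ψ (x i v) = x' i (ψ v))
    (h3 : ∀ v, ψ (x (i + 2) v) = x' (i + 2) (ψ v)) (v : V) :
    ψ (x (i + 1) v) = x' (i + 1) (ψ v) := by
  let Y : Module.End F V := ψ.symm.toLinearMap ∘ₗ x' (i + 1) ∘ₗ ψ.toLinearMap
  have hY : ∀ w, ψ (Y w) = x' (i + 1) (ψ w) := fun w => by simp [Y]
  have hcomm : ∀ (f g : V → V) , (∀ w, ψ (f w) = ψ (g w)) → ∀ w, f w = g w :=
    fun f g hfg w => ψ.injective (hfg w)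
  have w1 : q • (x i * Y) - q⁻¹ • (Y * x i) = (q - q⁻¹) • (1 : Module.End F V) := by
    refine LinearMap.ext (hcomm _ _ fun w => ?_)
    have := LinearMap.congr_fun (h'.weyl i) (ψ w)
    simpa [h1, hY] using this
  have w2 : q • (Y * x (i + 2)) - q⁻¹ • (x (i + 2) * Y) = (q - q⁻¹) • (1 : Module.End F V) := by
    refine LinearMap.ext (hcomm _ _ fun w => ?_)
    have := LinearMap.congr_fun (h'.weyl (i + 1)) (ψ w)
    rw [show i + 1 + 1 = i + 2 by ring] at this
    simpa [h3, hY] using this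
  have v1 := h.weyl i
  have v2 := h.weyl (i + 1)
  rw [show i + 1 + 1 = i + 2 by ring] at v2
  have hD : x (i + 1) - Y = 0 := by
    refine h.eq_zero_of_qcomm i ?_ ?_
    · rw [← sub_eq_zero, mul_sub, sub_mul, ← sub_eq_zero.mpr (v1.trans w1.symm)]
      module
    · rw [← sub_eq_zero, mul_sub, sub_mul, ← sub_eq_zero.mpr (v2.trans w2.symm)]
      module
  rw [sub_eq_zero.mp hD, hY]

end Box2

/-! ### The dual module -/

open Module (Dual)

lemma Serre.dualMap {X Y : Module.End F V} (h : Serre q X Y) :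
    Serre (A := Module.End F (Dual F V)) q (LinearMap.dualMap X) (LinearMap.dualMap Y) := by
  unfold Serre at *
  refine LinearMap.ext fun φ => LinearMap.ext fun v => ?_
  have := congrArg φ (LinearMap.congr_fun h v)
  simp only [pow_succ, pow_zero, one_mul, LinearMap.add_apply, LinearMap.smul_apply,
    Module.End.mul_apply, LinearMap.dualMap_apply, map_add, map_smul] at this ⊢
  rw [add_comm, ← this, add_comm]

lemma aeval_dualMap (f : Module.End F V) (p : Polynomial F) :
    Polynomial.aeval (R := F) (A := Module.End F (Dual F V)) (LinearMap.dualMap f) p =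
      LinearMap.dualMap (Polynomial.aeval f p) := by
  induction p using Polynomial.induction_on' with
  | add p r hp hr =>
    rw [map_add, map_add, hp, hr]
    refine LinearMap.ext fun φ => LinearMap.ext fun v => ?_
    simp
  | monomial n a =>
    rw [Polynomial.aeval_monomial, Polynomial.aeval_monomial]
    have hpow : ∀ n : ℕ, (LinearMap.dualMap f : Module.End F (Dual F V)) ^ n =
        LinearMap.dualMap (f ^ n) := by
      intro n
      induction n with
      | zero => rfl
      | succ n ih => rw [pow_succ, ih, pow_succ']; rfl
    rw [hpow]
    refine LinearMap.ext fun φ => LinearMap.ext fun v => ?_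
    simp [Module.End.mul_apply]

/-- The transposed action, with the generators relabelled by the reflection `i ↦ 2 - i` in order
to restore the order of the factors in the Weyl relations. -/
def dualAct (x : ZMod 4 → Module.End F V) (i : ZMod 4) : Module.End F (Dual F V) :=
  LinearMap.dualMap (x (2 - i))

section DualBox

variable {d : ℕ} {x : ZMod 4 → Module.End F V}

lemma BoxHyp.dual [FiniteDimensional F V] (h : BoxHyp q d x) : BoxHyp q d (dualAct x) where
  hq := h.hq
  hq1 := h.hq1
  weyl i := by
    refine LinearMap.ext fun φ => LinearMap.ext fun v => ?_
    have := congrArg φ (LinearMap.congr_fun (h.weyl (2 - (i + 1))) v)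
    rw [show 2 - (i + 1) + 1 = 2 - i by ring] at this
    simpa [dualAct, LinearMap.dualMap_apply] using this
  serre i := by
    have := (h.serre (2 - i)).dualMap
    rwa [show ∀ i : ZMod 4, 2 - i + 2 = 2 - (i + 2) by decide] at this
  ann i := by
    rw [dualAct, aeval_dualMap, h.ann]
    exact LinearMap.ext fun φ => LinearMap.ext fun v => by simp [LinearMap.dualMap_apply]
  ne i := by
    rw [dualAct, aeval_dualMap]
    intro h0
    refine h.ne (2 - i) (LinearMap.ext fun v => ?_)
    rw [LinearMap.zero_apply, ← Module.forall_dual_apply_eq_zero_iff F]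
    intro φ
    exact LinearMap.congr_fun (LinearMap.congr_fun h0 φ) v
  irr W hW := by
    have hinv : ∀ i, ∀ v ∈ W.dualCoannihilator, x i v ∈ W.dualCoannihilator := by
      intro i v hv
      rw [Submodule.mem_dualCoannihilator] at hv ⊢
      intro φ hφ
      have := hv _ (hW (2 - i) φ hφ)
      simpa [dualAct, LinearMap.dualMap_apply] using this
    have hann := Subspace.dualCoannihilator_dualAnnihilator_eq (W := W)
    rcases h.irr _ hinv with hb | ht
    · right; rw [← hann, hb, Submodule.dualAnnihilator_bot]
    · left; rw [← hann, ht, Submodule.dualAnnihilator_top]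

lemma upOp_comm (y : Module.End F V) (e : ℤ) (c : F) (a : ℕ) :
    upOp q e y a * (y - c • 1) = (y - c • 1) * upOp q e y a := by
  induction a with
  | zero => simp [upOp]
  | succ a ih =>
    have : (y - c • 1) * (y - q ^ (2 * (a : ℤ) - e) • 1) =
        (y - q ^ (2 * (a : ℤ) - e) • 1) * (y - c • 1) := by
      simp only [mul_sub, sub_mul, mul_smul_comm, smul_mul_assoc, mul_one, one_mul]
      module
    rw [upOp, mul_assoc, ih, ← mul_assoc, ← this, mul_assoc]

lemma upOp_dual (y : Module.End F V) (e : ℤ) (a : ℕ) (φ : Dual F V) (v : V) :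
    upOp q e (LinearMap.dualMap y : Module.End F (Dual F V)) a φ v = φ (upOp q e y a v) := by
  induction a generalizing v with
  | zero => rfl
  | succ a ih =>
    have hc := LinearMap.congr_fun (upOp_comm (q := q) y e (q ^ (2 * (a : ℤ) - e)) a) v
    rw [upOp, upOp, ← hc, Module.End.mul_apply, Module.End.mul_apply, ← ih]
    simp [LinearMap.dualMap_apply]

/-- The scalar by which `dnOp q e X a` acts on an eigenvector with eigenvalue `q ^ e`. -/
def dnScalar (q : F) (e : ℤ) (a : ℕ) : F :=
  ∏ j ∈ Finset.range a, (q ^ e - q ^ (e - 2 * ((j : ℤ) + 1)))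

lemma dnOp_dual (X : Module.End F V) (e : ℤ) (a : ℕ) (φ : Dual F V) {v : V}
    (hv : X v = q ^ e • v) :
    dnOp q e (LinearMap.dualMap X : Module.End F (Dual F V)) a φ v = dnScalar q e a * φ v := by
  induction a generalizing φ with
  | zero => simp [dnOp, dnScalar]
  | succ a ih =>
    rw [dnOp, Module.End.mul_apply, ih, dnScalar, dnScalar, Finset.prod_range_succ]
    simp [LinearMap.dualMap_apply, hv]
    ring

lemma dual_dnOp (X : Module.End F V) (e : ℤ) (a : ℕ) {φ : Dual F V} (v : V)
    (hφ : ∀ v, φ (X v) = q ^ e * φ v) :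
    φ (dnOp q e X a v) = dnScalar q e a * φ v := by
  induction a generalizing v with
  | zero => simp [dnOp, dnScalar]
  | succ a ih =>
    rw [dnOp, Module.End.mul_apply, ih, dnScalar, dnScalar, Finset.prod_range_succ]
    simp [hφ]
    ring

/-- The module is isomorphic to its dual. Both restrict to irreducible packages for the
generators `1` and `3`, and the eigenvalues of `dnOp * upOp` on `v ∈ U 0` and `v' ∈ U' 0` agree,
as is seen by pairing `v'` with `v`. -/
lemma BoxHyp.exists_dual_iso [IsAlgClosed F] [FiniteDimensional F V] (h : BoxHyp q d x) :
    ∃ ψ : V ≃ₗ[F] Dual F V, ∀ i v, ψ (x i v) = LinearMap.dualMap (x (2 - i)) (ψ v) := by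
  have h' := h.dual
  have p := h.package 1
  have p' := h'.package 1
  obtain ⟨u, hu0, hu, γ, hγ⟩ := p.exists_line h.hq h.hq1
    (by rw [h.splitU_zero]; exact h.eig_zero_ne 1) (h.irr_pair 1)
  obtain ⟨u', hu0', hu', γ', hγ'⟩ := p'.exists_line h.hq h.hq1
    (by rw [h'.splitU_zero]; exact h'.eig_zero_ne 1) (h'.irr_pair 1)
  have hum : u ∈ splitU q d x 1 0 := by rw [hu]; exact Submodule.mem_span_singleton_self u
  have hum' : u' ∈ splitU q d (dualAct x) 1 0 := by
    rw [hu']; exact Submodule.mem_span_singleton_self u'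
  have ex : x 1 u = q ^ (d : ℤ) • u := by
    rw [h.splitU_zero, mem_eig] at hum
    simpa using hum
  have ex' : ∀ v, u' (x 1 v) = q ^ (d : ℤ) * u' v := by
    intro v
    rw [h'.splitU_zero, mem_eig] at hum'
    have := LinearMap.congr_fun hum' v
    rw [dualAct, show (2 - 1 : ZMod 4) = 1 by decide] at this
    simpa [LinearMap.dualMap_apply] using this
  have hpair : u' u ≠ 0 := by
    intro h0
    refine hu0' (ext_of_iSup (h.diag 1).sup fun n v hv => ?_)
    rw [LinearMap.zero_apply]
    by_cases hn : n = 0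
    · rw [hn, ← h.splitU_zero, hu] at hv
      obtain ⟨c, rfl⟩ := Submodule.mem_span_singleton.mp hv
      rw [map_smul, h0, smul_zero]
    · have e := ex' v
      rw [mem_eig.mp hv, map_smul, smul_eq_mul] at e
      by_contra hne
      have := zpow_inj h.hq h.hq1 (mul_right_cancel₀ hne e)
      omega
  have hγγ : γ' = γ := by
    funext a
    have e1 := congrArg (fun φ : Dual F V => φ u) (hγ' a)
    have e2 := congrArg u' (hγ a)
    simp only [dualAct] at e1
    rw [show (2 - 1 : ZMod 4) = 1 by decide, show (2 - (1 + 2) : ZMod 4) = 1 + 2 by decide,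
      dnOp_dual _ _ _ _ ex, upOp_dual] at e1
    rw [dual_dnOp _ _ _ _ ex'] at e2
    rw [e2] at e1
    simp only [LinearMap.smul_apply, map_smul, smul_eq_mul] at e1
    exact (mul_right_cancel₀ hpair e1).symm
  subst hγγ
  obtain ⟨ψ, hψ1, hψ3⟩ := p.exists_iso h.hq h.hq1 p' (h.irr_pair 1) (h'.irr_pair 1) hum hu0
    hum' hu0' γ' hγ hγ'
  refine ⟨ψ, fun i v => ?_⟩
  have hj : ∀ j : ZMod 4, j = 1 ∨ j = 1 + 1 ∨ j = 1 + 2 ∨ j = 1 + 2 + 1 := by decide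
  change ψ (x i v) = dualAct x i (ψ v)
  rcases hj i with rfl | rfl | rfl | rfl
  · exact hψ1 v
  · exact h.intertwine_succ h' ψ 1 hψ1 hψ3 v
  · exact hψ3 v
  · refine h.intertwine_succ h' ψ (1 + 2) hψ3 ?_ v
    rw [add_two_two]
    exact hψ1

lemma BoxHyp.rotate (h : BoxHyp q d x) : BoxHyp q d (fun i => x (i + 1)) where
  hq := h.hq
  hq1 := h.hq1
  weyl i := h.weyl (i + 1)
  serre i := by
    have := h.serre (i + 1)
    rwa [show i + 1 + 2 = i + 2 + 1 by ring] at this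
  ann i := h.ann (i + 1)
  ne i := h.ne (i + 1)
  irr W hW := h.irr W fun i => by
    have := hW (i - 1)
    rwa [sub_add_cancel] at this

/-- Composing the isomorphisms with the dual obtained from the module and from its rotation: they
relate `x i` to the transposes of `x (2 - i)` and of `x (4 - i)` respectively. -/
lemma BoxHyp.exists_rho_sq [IsAlgClosed F] [FiniteDimensional F V] (h : BoxHyp q d x) :
    ∃ σ : V ≃ₗ[F] V, ∀ i v, σ (x i v) = x (i + 2) (σ v) := by
  obtain ⟨ψ, hψ⟩ := h.exists_dual_iso
  obtain ⟨χ, hχ⟩ := h.rotate.exists_dual_iso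
  refine ⟨ψ.trans χ.symm, fun i v => ?_⟩
  have e := hχ (i + 1) (χ.symm (ψ v))
  rw [show ∀ i : ZMod 4, i + 1 + 1 = i + 2 by decide,
    show ∀ i : ZMod 4, 2 - (i + 1) + 1 = 2 - i by decide, LinearEquiv.apply_symm_apply] at e
  rw [LinearEquiv.trans_apply, LinearEquiv.trans_apply, LinearEquiv.symm_apply_eq, hψ, e]

end DualBox


/-! ### Modules for the presented algebra -/

/-- The generators act on an irreducible type-`1` module of diameter `d` by operators satisfying
`BoxHyp`; the presentation of `□_q` is only used here. -/
lemma BoxHyp.of_rep (hq : q ≠ 0) (hq1 : ∀ n : ℕ, 0 < n → q ^ n ≠ 1)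
    (π : BoxQ F q →ₐ[F] Module.End F V) (hirr : IsIrrep F π) {d : ℕ} (hd : Type1Diam F q π d) :
    BoxHyp q d (fun i => π (bx F q i)) where
  hq := hq
  hq1 := hq1
  weyl i := by
    have h := congrArg π (RingQuot.mkAlgHom_rel F (BoxRel.rel1 (q := q) i))
    simpa only [map_sub, map_smul, map_mul, map_one, bx] using h
  serre i := by
    have h := congrArg π (RingQuot.mkAlgHom_rel F (BoxRel.rel2 (q := q) i))
    have hne : q - q⁻¹ ≠ 0 := by
      intro h0
      apply hq1 2 two_pos
      rw [sub_eq_zero] at h0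
      rw [pow_two]
      nth_rewrite 2 [h0]
      exact mul_inv_cancel₀ hq
    have hc : (q ^ 3 - (q⁻¹) ^ 3) / (q - q⁻¹) = q ^ 2 + 1 + (q⁻¹) ^ 2 := by
      rw [div_eq_iff hne]
      field_simp
      ring
    rw [hc] at h
    unfold Serre
    simpa only [map_add, map_smul, map_mul, map_pow, map_one, bx] using h
  ann i := by
    obtain ⟨hs, he⟩ := hd i
    refine ext_of_iSup hs fun θ v hv => ?_
    by_cases hv0 : v = 0
    · simp [hv0]
    have hθ : θ ∈ EigSet F (π (bx F q i)) := fun hb => hv0 (by simpa [hb] using hv)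
    rw [he] at hθ
    obtain ⟨n, hn, hθ⟩ := hθ
    rw [Module.End.aeval_apply_of_hasEigenvector ⟨hv, hv0⟩, Polynomial.eval_prod,
      Finset.prod_eq_zero (Finset.mem_range.2 (Nat.lt_succ_of_le hn)) (by simp [hθ])]
    simp
  ne i := by
    obtain ⟨-, he⟩ := hd i
    have hθ : q ^ (d : ℤ) ∈ EigSet F (π (bx F q i)) := by
      rw [he]
      exact ⟨0, Nat.zero_le _, by simp⟩
    obtain ⟨v, hv, hv0⟩ := (Submodule.ne_bot_iff _).1 hθ
    intro h0
    have h1 := LinearMap.congr_fun h0 v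
    rw [Module.End.aeval_apply_of_hasEigenvector ⟨hv, hv0⟩, Polynomial.eval_prod,
      LinearMap.zero_apply, smul_eq_zero_iff_left hv0, Finset.prod_eq_zero_iff] at h1
    obtain ⟨n, -, hn⟩ := h1
    rw [Polynomial.eval_sub, Polynomial.eval_X, Polynomial.eval_C, sub_eq_zero] at hn
    have := zpow_inj hq hq1 hn
    push_cast at this
    omega
  irr W hW := by
    refine hirr.2 W fun a => ?_
    obtain ⟨a, rfl⟩ := RingQuot.mkAlgHom_surjective F (BoxRel F q) a
    induction a using FreeAlgebra.induction with
    | grade0 r =>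
      intro v hv
      rw [AlgHom.commutes, AlgHom.commutes, Module.algebraMap_end_apply]
      exact W.smul_mem r hv
    | grade1 i => exact hW i
    | mul a b ha hb =>
      intro v hv
      rw [map_mul, map_mul]
      exact ha _ (hb v hv)
    | add a b ha hb =>
      intro v hv
      rw [map_add, map_add]
      exact W.add_mem (ha v hv) (hb v hv)

end Aux

/-- A finite-dimensional irreducible `□_q`-module of type 1 is isomorphic to its twist
by `ρ²`: there is a linear bijection `σ` with `σ ∘ x_i = x_{i+2} ∘ σ` for all `i`. -/
theorem stmt17 [IsAlgClosed F] [CharZero F] (q : F) (hq0 : q ≠ 0)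
    (hq1 : ∀ n : ℕ, 0 < n → q ^ n ≠ 1)
    (V : Type) [AddCommGroup V] [Module F V] [FiniteDimensional F V]
    (π : BoxQ F q →ₐ[F] Module.End F V) (hirr : IsIrrep F π)
    (hty : ∃ d : ℕ, Type1Diam F q π d) :
    ∃ σ : V ≃ₗ[F] V, ∀ (i : ZMod 4) (v : V),
      σ (π (bx F q i) v) = π (bx F q (i + 2)) (σ v) := by
  obtain ⟨d, hd⟩ := hty
  exact (BoxHyp.of_rep hq0 hq1 π hirr hd).exists_rho_sq
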